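/- Let d ≥ 2 be a positive integer and let {X_n : n ∈ ℕ^d} be a negatively associated field of identically distributed random variables with E[X_1] = 0 and E[X_1² log^{d-1}(|X_1|) / log log (|X_1|)] < ∞. Then almost surely, limsup_{n → ∞} |S_n| / (2d |n| log log |n|)^{1/2} ≤ (E[X_1²])^{1/2}, where n → ∞ means all coordinates n_1, …, n_d tend to infinity. -/

import Mathlib

/-!
The bound is proved separately on each dyadic block
`{n : 2^(q i) ≤ n i < 2^(q i + 1) for all i}`, `q ∈ ℕ^d`. Put `Q = Σ q i`, so that `|n| ≈ 2^Q`
on the block. About `Q^(d-1)` blocks share the same `Q`, hence by Borel–Cantelli an event of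
probability `O(Q^(-r))` with `r > d` in each block happens in only finitely many blocks
(`borel_cantelli_rpow`). As `log log 2^Q ≈ log Q`, a Gaussian tail at level
`(σ + ε) √(2 d |n| log log |n|)` is just small enough, which is where the constant `2 d` comes from.

On the scale `Q` each variable is cut into four monotone layers (`clamp_split`) at the truncation
levels `lowT = 2^(Q/2) / Q^(d+2)` and `highT = 2^(Q/2) / Q^(1/8)`. Since `E X = 0`, the partial sum
is the sum of the centred partial sums of the layers (`sum_split`).

* Lowest layer, `|X| ≤ lowT`. Monotone functions of a negatively associated family satisfy
  `E ∏ exp(t Y_k) ≤ ∏ E exp(t Y_k)`, so Bernstein's inequality holds (`NAField.bernstein`). It gives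
  the sharp constant for the sums over boxes whose corner is `n` rounded down to about `s` binary
  digits (`sharp_as`): a block contains boundedly many such boxes. No maximal inequality is used to
  pass from the rounded corners to all `n`; instead the rest of the box of `n` is split into
  rectangles by refining the binary expansions of the coordinates, and Bernstein's inequality is
  applied to all these rectangles at once (`chain_as`). A refinement by `j` digits in total shrinks
  the rectangles by `2^(-j)` and multiplies their number by `2^j`, so the Gaussian parts of the
  bounds form a convergent series, and they gain a factor `2^(-s/2)`.
* The two middle layers, `lowT < |X| ≤ highT` with a fixed sign of `X`. Their second moment is
  `O(Q^(-1/2))`, because `E[X² (log|X|)^(1/2)] < ∞` when `d ≥ 2` (`integrable_weak`). Being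
  one-signed, their sums are monotone in `n`, so it suffices to control them on a grid with
  polynomially many points in `Q` (`middle_as`).
* Highest layer, `|X| > highT`. By negative association a block eventually contains only a bounded
  number of such values (`few_jumps`), and by the full moment condition each of them is at most
  `ε √(2^Q log log 2^Q)` (`large_as`); hence `high_as`.

`block_bound` adds up the four contributions.
-/

open MeasureTheory Filter Finset

noncomputable section

/-- `plog x = ln (max x e)`, the truncated logarithm used in the paper. -/
def plog (x : ℝ) : ℝ := Real.log (max x (Real.exp 1))

/-- A family of real random variables `X i`, `i ∈ S`, is *negatively associated* if for every
pair of disjoint finite subsets `A`, `B` of `S` and all coordinatewise non-decreasing functions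
`f`, `g`, one has `Cov (f (X_i, i ∈ A), g (X_j, j ∈ B)) ≤ 0`, whenever the covariance exists. -/
def NegAssocOn {Ω : Type} [MeasurableSpace Ω] (μ : Measure Ω) {ι : Type}
    (X : ι → Ω → ℝ) (S : Set ι) : Prop :=
  ∀ A B : Finset ι, ↑A ⊆ S → ↑B ⊆ S → Disjoint A B →
    ∀ (f : (↥A → ℝ) → ℝ) (g : (↥B → ℝ) → ℝ), Monotone f → Monotone g →
      Integrable (fun ω => f (fun i => X i ω)) μ →
      Integrable (fun ω => g (fun j => X j ω)) μ →
      Integrable (fun ω => f (fun i => X i ω) * g (fun j => X j ω)) μ →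
      ∫ ω, f (fun i => X i ω) * g (fun j => X j ω) ∂μ ≤
        (∫ ω, f (fun i => X i ω) ∂μ) * ∫ ω, g (fun j => X j ω) ∂μ

set_option linter.unusedSectionVars false

/-! ### Negative association: product bounds and an exponential inequality -/

section

/-- The probabilistic standing assumptions: a negatively associated, identically distributed
field of random variables indexed by the positive orthant `{k : 1 ≤ k}`. -/
structure NAField {Ω : Type} [MeasurableSpace Ω] (μ : Measure Ω) {d : ℕ}
    (X : (Fin d → ℕ) → Ω → ℝ) : Prop where
  meas : ∀ k : Fin d → ℕ, 1 ≤ k → Measurable (X k)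
  na : NegAssocOn μ X (Set.Ici 1)
  idd : ∀ k : Fin d → ℕ, 1 ≤ k → μ.map (X k) = μ.map (X 1)

variable {Ω : Type} [MeasurableSpace Ω] {μ : Measure Ω} [IsProbabilityMeasure μ] {d : ℕ}
  {X : (Fin d → ℕ) → Ω → ℝ}

namespace NAField

lemma integral_comp (H : NAField μ X) {k : Fin d → ℕ} (hk : 1 ≤ k) {h : ℝ → ℝ}
    (hh : Measurable h) : ∫ ω, h (X k ω) ∂μ = ∫ ω, h (X 1 ω) ∂μ := by
  rw [← integral_map (H.meas k hk).aemeasurable hh.aestronglyMeasurable,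
    ← integral_map (H.meas 1 le_rfl).aemeasurable hh.aestronglyMeasurable, H.idd k hk]

lemma measure_comp (H : NAField μ X) {k : Fin d → ℕ} (hk : 1 ≤ k) {s : Set ℝ}
    (hs : MeasurableSet s) : μ {ω | X k ω ∈ s} = μ {ω | X 1 ω ∈ s} := by
  have h1 := Measure.map_apply (μ := μ) (H.meas k hk) hs
  have h2 := Measure.map_apply (μ := μ) (H.meas 1 le_rfl) hs
  rw [H.idd k hk] at h1
  exact h1.symm.trans h2

lemma integrable_comp (H : NAField μ X) {k : Fin d → ℕ} (hk : 1 ≤ k) {h : ℝ → ℝ}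
    (hh : Measurable h) {C : ℝ} (hC : ∀ x, |h x| ≤ C) : Integrable (fun ω => h (X k ω)) μ :=
  Integrable.of_bound (hh.comp (H.meas k hk)).aestronglyMeasurable C
    (Eventually.of_forall fun _ => hC _)

/-- Product bound for a bounded non-negative function that is monotone or antitone: the
expectation of a product is at most the product of the expectations. -/
lemma prod_le (H : NAField μ X) {h : ℝ → ℝ} (hmono : Monotone h ∨ Antitone h)
    (h0 : ∀ x, 0 ≤ h x) {C : ℝ} (hC : ∀ x, h x ≤ C) (A : Finset (Fin d → ℕ))
    (hA : ∀ k ∈ A, 1 ≤ k) :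
    ∫ ω, ∏ k ∈ A, h (X k ω) ∂μ ≤ (∫ ω, h (X 1 ω) ∂μ) ^ A.card := by
  have hhm : Measurable h := by
    rcases hmono with hm | hm
    · exact hm.measurable
    · exact hm.measurable
  have hCabs : ∀ x, |h x| ≤ C := fun x => by rw [abs_of_nonneg (h0 x)]; exact hC x
  have hC0 : 0 ≤ C := (h0 0).trans (hC 0)
  classical
  induction A using Finset.induction_on with
  | empty => simp
  | insert j A hj ih =>
    have hj1 : 1 ≤ j := hA j (mem_insert_self _ _)
    have hA1 : ∀ k ∈ A, 1 ≤ k := fun k hk => hA k (mem_insert_of_mem hk)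
    have ih := ih hA1
    have hint1 : Integrable (fun ω => ∏ k ∈ A, h (X k ω)) μ := by
      refine Integrable.of_bound (C := C ^ A.card) ?_ (Eventually.of_forall fun ω => ?_)
      · refine Measurable.aestronglyMeasurable ?_
        exact Finset.measurable_prod _ fun k hk => hhm.comp (H.meas k (hA1 k hk))
      · rw [Real.norm_eq_abs, Finset.abs_prod]
        exact (Finset.prod_le_prod (fun _ _ => abs_nonneg _) fun k _ => hCabs _).trans
          (by simp)
    have hint2 := H.integrable_comp hj1 hhm hCabs
    have hint3 : Integrable (fun ω => h (X j ω) * ∏ k ∈ A, h (X k ω)) μ := by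
      refine hint1.bdd_mul (c := C) hint2.aestronglyMeasurable (Eventually.of_forall fun ω => ?_)
      exact hCabs _
    have key : ∫ ω, h (X j ω) * ∏ k ∈ A, h (X k ω) ∂μ ≤
        (∫ ω, h (X j ω) ∂μ) * ∫ ω, ∏ k ∈ A, h (X k ω) ∂μ := by
      have hattach : ∀ ω, ∏ k : A, h (X k ω) = ∏ k ∈ A, h (X k ω) := fun ω =>
        Finset.prod_coe_sort A fun k => h (X k ω)
      have hs1 : ((({j} : Finset (Fin d → ℕ)) : Set (Fin d → ℕ))) ⊆ Set.Ici 1 := by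
        simpa using hj1
      have hs2 : ((A : Set (Fin d → ℕ))) ⊆ Set.Ici 1 := fun k hk => hA1 k hk
      have hdis : Disjoint ({j} : Finset (Fin d → ℕ)) A := by simpa using hj
      rcases hmono with hm | hm
      · have := H.na {j} A hs1 hs2 hdis (fun x => h (x ⟨j, by simp⟩)) (fun x => ∏ k, h (x k))
          (fun x y hxy => hm (hxy _))
          (fun x y hxy => Finset.prod_le_prod (fun _ _ => h0 _) fun k _ => hm (hxy k))
          hint2 (by simpa only [hattach] using hint1) (by simpa only [hattach] using hint3)
        simpa only [hattach] using this
      · have := H.na {j} A hs1 hs2 hdis (fun x => -h (x ⟨j, by simp⟩))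
          (fun x => -∏ k, h (x k))
          (fun x y hxy => neg_le_neg (hm (hxy _)))
          (fun x y hxy => neg_le_neg
            (Finset.prod_le_prod (fun _ _ => h0 _) fun k _ => hm (hxy k)))
          hint2.neg (by simp only [hattach]; exact hint1.neg)
          (by simpa only [hattach, neg_mul_neg] using hint3)
        simpa only [hattach, neg_mul_neg, integral_neg] using this
    simp only [Finset.prod_insert hj, Finset.card_insert_of_notMem hj]
    rw [pow_succ']
    refine key.trans ?_
    rw [H.integral_comp hj1 hhm]
    exact mul_le_mul_of_nonneg_left ih (integral_nonneg fun _ => h0 _)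

end NAField

/-- The second-order bound on `exp` behind Bernstein's inequality. -/
lemma exp_le_quadratic {u c : ℝ} (hu : |u| ≤ c) (hc : c ≤ 1) :
    Real.exp u ≤ 1 + u + u ^ 2 * ((1 + c) / 2) := by
  have h := Real.exp_bound (hu.trans hc) (n := 3) (by norm_num)
  simp only [Finset.sum_range_succ, Finset.sum_range_zero, Nat.factorial] at h
  have h2 := (abs_le.1 h).2
  norm_num at h2
  have h3 : |u| ^ 3 ≤ u ^ 2 * c := by
    rw [pow_succ, sq_abs]; exact mul_le_mul_of_nonneg_left hu (sq_nonneg _)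
  have h4 : 0 ≤ u ^ 2 * c := le_trans (by positivity) h3
  nlinarith

namespace NAField

lemma mgf_le (H : NAField μ X) {g : ℝ → ℝ} (hg : Measurable g) {m M v t : ℝ}
    (hm : m = ∫ ω, g (X 1 ω) ∂μ) (hM : ∀ x, |g x - m| ≤ M)
    (hv : ∫ ω, (g (X 1 ω) - m) ^ 2 ∂μ ≤ v) (htM : |t| * M ≤ 1) :
    ∫ ω, Real.exp (t * (g (X 1 ω) - m)) ∂μ ≤ Real.exp (v * t ^ 2 * ((1 + |t| * M) / 2)) := by
  have hM0 : 0 ≤ M := (abs_nonneg _).trans (hM 0)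
  have hgm : Measurable fun x => g x - m := hg.sub_const m
  have i1 : Integrable (fun ω => g (X 1 ω) - m) μ := H.integrable_comp le_rfl hgm hM
  have i2 : Integrable (fun ω => (g (X 1 ω) - m) ^ 2) μ :=
    H.integrable_comp (h := fun x => (g x - m) ^ 2) le_rfl (hgm.pow_const 2) (C := M ^ 2)
      fun x => by rw [abs_pow]; exact pow_le_pow_left₀ (abs_nonneg _) (hM x) 2
  have hb : ∀ x, |t * (g x - m)| ≤ |t| * M := fun x => by
    rw [abs_mul]; exact mul_le_mul_of_nonneg_left (hM x) (abs_nonneg _)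
  have i3 : Integrable (fun ω => Real.exp (t * (g (X 1 ω) - m))) μ :=
    H.integrable_comp (h := fun x => Real.exp (t * (g x - m))) le_rfl
      (hgm.const_mul t).exp (C := Real.exp 1) fun x => by
        rw [Real.abs_exp]; exact Real.exp_le_exp.2 ((le_abs_self _).trans ((hb x).trans htM))
  have hzero : ∫ ω, (g (X 1 ω) - m) ∂μ = 0 := by
    have : Integrable (fun ω => g (X 1 ω)) μ := by
      refine (i1.add (integrable_const m)).congr (Eventually.of_forall fun ω => ?_)
      simp
    rw [integral_sub this (integrable_const m)]
    simp [hm]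
  calc ∫ ω, Real.exp (t * (g (X 1 ω) - m)) ∂μ
      ≤ ∫ ω, (1 + t * (g (X 1 ω) - m) +
          (t ^ 2 * ((1 + |t| * M) / 2)) * (g (X 1 ω) - m) ^ 2) ∂μ := by
        refine integral_mono i3 (((integrable_const _).add (i1.const_mul _)).add
          (i2.const_mul _)) fun ω => ?_
        have := exp_le_quadratic (hb (X 1 ω)) htM
        simp only
        nlinarith
    _ = 1 + (t ^ 2 * ((1 + |t| * M) / 2)) * ∫ ω, (g (X 1 ω) - m) ^ 2 ∂μ := by
        have i4 : Integrable (fun ω => 1 + t * (g (X 1 ω) - m)) μ :=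
          (integrable_const _).add (i1.const_mul _)
        rw [integral_add i4 (i2.const_mul _), integral_add (integrable_const _) (i1.const_mul _), integral_const_mul,
          integral_const_mul, hzero]
        simp
    _ ≤ 1 + (t ^ 2 * ((1 + |t| * M) / 2)) * v := by
        gcongr
    _ ≤ _ := by
        have := Real.add_one_le_exp (v * t ^ 2 * ((1 + |t| * M) / 2))
        linarith

/-- Bernstein's inequality for negatively associated variables, with the Chernoff parameter `t`
left free. -/
lemma bernstein (H : NAField μ X) {g : ℝ → ℝ} (hg : Monotone g) {m M v t x N : ℝ}
    (hm : m = ∫ ω, g (X 1 ω) ∂μ) (hM : ∀ x, |g x - m| ≤ M)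
    (hv : ∫ ω, (g (X 1 ω) - m) ^ 2 ∂μ ≤ v) (ht : 0 ≤ t) (htM : t * M ≤ 1)
    {A : Finset (Fin d → ℕ)} (hA : ∀ k ∈ A, 1 ≤ k) (hN : (A.card : ℝ) ≤ N) :
    μ {ω | x ≤ |∑ k ∈ A, (g (X k ω) - m)|} ≤
      ENNReal.ofReal (2 * Real.exp (-(t * x) + N * v * t ^ 2 * ((1 + t * M) / 2))) := by
  have hM0 : 0 ≤ M := (abs_nonneg _).trans (hM 0)
  have hv0 : 0 ≤ v := (integral_nonneg fun _ => sq_nonneg _).trans hv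
  have hgm : Measurable fun x => g x - m := hg.measurable.sub_const m
  have one : ∀ τ : ℝ, |τ| = t → μ {ω | Real.exp (t * x) ≤
      Real.exp (τ * ∑ k ∈ A, (g (X k ω) - m))} ≤
      ENNReal.ofReal (Real.exp (-(t * x) + N * v * t ^ 2 * ((1 + t * M) / 2))) := by
    intro τ hτ
    have hb : ∀ x, Real.exp (τ * (g x - m)) ≤ Real.exp 1 := fun x => by
      refine Real.exp_le_exp.2 ((le_abs_self _).trans ?_)
      rw [abs_mul, hτ]
      exact (mul_le_mul_of_nonneg_left (hM x) ht).trans htM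
    have hp := H.prod_le (h := fun x => Real.exp (τ * (g x - m))) (by
        rcases le_total 0 τ with h | h
        · left; intro a b hab
          exact Real.exp_le_exp.2 (mul_le_mul_of_nonneg_left (sub_le_sub_right (hg hab) _) h)
        · right; intro a b hab
          exact Real.exp_le_exp.2 (mul_le_mul_of_nonpos_left (sub_le_sub_right (hg hab) _) h))
      (fun x => (Real.exp_pos _).le) hb A hA
    have hmgf := H.mgf_le hg.measurable hm hM hv (t := τ) (by rw [hτ]; exact htM)
    rw [hτ, ← sq_abs τ, hτ] at hmgf
    have hprod : ∀ ω, ∏ k ∈ A, Real.exp (τ * (g (X k ω) - m)) =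
        Real.exp (τ * ∑ k ∈ A, (g (X k ω) - m)) := fun ω => by
      rw [← Real.exp_sum, Finset.mul_sum]
    simp only [hprod] at hp
    have hint : Integrable (fun ω => Real.exp (τ * ∑ k ∈ A, (g (X k ω) - m))) μ := by
      refine Integrable.of_bound (C := Real.exp 1 ^ A.card) ?_ (Eventually.of_forall fun ω => ?_)
      · refine Measurable.aestronglyMeasurable ?_
        exact ((Finset.measurable_sum _ fun k hk => hgm.comp (H.meas k (hA k hk))).const_mul
          τ).exp
      · rw [← hprod, Real.norm_eq_abs, Finset.abs_prod]
        refine (Finset.prod_le_prod (fun _ _ => abs_nonneg _) fun k _ => ?_).trans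
          (by rw [Finset.prod_const])
        rw [Real.abs_exp]; exact hb _
    have hmarkov := mul_meas_ge_le_integral_of_nonneg
      (Eventually.of_forall fun ω => (Real.exp_pos _).le) hint (Real.exp (t * x))
    have hpow : (∫ ω, Real.exp (τ * (g (X 1 ω) - m)) ∂μ) ^ A.card ≤
        Real.exp (N * v * t ^ 2 * ((1 + t * M) / 2)) := by
      refine (pow_le_pow_left₀ (integral_nonneg fun _ => (Real.exp_pos _).le) hmgf _).trans ?_
      rw [← Real.exp_nat_mul]
      refine Real.exp_le_exp.2 ?_
      have : 0 ≤ v * t ^ 2 * ((1 + t * M) / 2) := by positivity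
      nlinarith
    rw [← ENNReal.ofReal_toReal (measure_ne_top μ _)]
    refine ENNReal.ofReal_le_ofReal ?_
    rw [Real.exp_add, Real.exp_neg]
    have hpos := Real.exp_pos (t * x)
    rw [inv_mul_eq_div, le_div_iff₀ hpos, mul_comm]
    exact hmarkov.trans (hp.trans hpow)
  have hsub : {ω | x ≤ |∑ k ∈ A, (g (X k ω) - m)|} ⊆
      {ω | Real.exp (t * x) ≤ Real.exp (t * ∑ k ∈ A, (g (X k ω) - m))} ∪
      {ω | Real.exp (t * x) ≤ Real.exp (-t * ∑ k ∈ A, (g (X k ω) - m))} := by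
    intro ω hω
    simp only [Set.mem_ofPred_eq, Set.mem_union, Real.exp_le_exp] at hω ⊢
    rcases le_abs.1 hω with h | h
    · left; exact mul_le_mul_of_nonneg_left h ht
    · right; nlinarith
  refine (measure_mono hsub).trans ((measure_union_le _ _).trans ?_)
  refine (add_le_add (one t (abs_of_nonneg ht)) (one (-t) (by rw [abs_neg, abs_of_nonneg ht]))).trans
    ?_
  rw [← ENNReal.ofReal_add (Real.exp_pos _).le (Real.exp_pos _).le, two_mul]

end NAField

end

/-! ### The truncated logarithm -/

section

lemma plog_mono : Monotone plog := fun x y h => by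
  unfold plog
  exact Real.log_le_log (lt_max_of_lt_right (Real.exp_pos 1)) (max_le_max_right _ h)

lemma one_le_plog (x : ℝ) : 1 ≤ plog x := by
  unfold plog
  rw [Real.le_log_iff_exp_le (lt_max_of_lt_right (Real.exp_pos 1))]
  exact le_max_right _ _

lemma plog_of_le {x : ℝ} (h : Real.exp 1 ≤ x) : plog x = Real.log x := by
  unfold plog; rw [max_eq_left h]

lemma log_le_plog {x : ℝ} (hx : 0 < x) : Real.log x ≤ plog x :=
  Real.log_le_log hx (le_max_left _ _)

lemma plog_le_self {x : ℝ} (hx : 1 ≤ x) : plog x ≤ x := by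
  rcases le_total (Real.exp 1) x with h | h
  · rw [plog_of_le h]
    exact (Real.log_le_sub_one_of_pos (by linarith)).trans (by linarith)
  · unfold plog; rw [max_eq_right h]; simpa using hx

/-- `lam Q = log log 2^Q`, the iterated logarithm on the dyadic scale. -/
def lam (Q : ℕ) : ℝ := plog (plog (2 ^ Q))

lemma one_le_lam (Q : ℕ) : 1 ≤ lam Q := one_le_plog _

lemma lam_pos (Q : ℕ) : 0 < lam Q := one_pos.trans_le (one_le_lam Q)

lemma lam_le {Q : ℕ} (hQ : 1 ≤ Q) : lam Q ≤ Q := by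
  have hQ' : (1 : ℝ) ≤ Q := by exact_mod_cast hQ
  have h1 : plog (2 ^ Q) ≤ Q := by
    unfold plog
    rw [Real.log_le_iff_le_exp (lt_max_of_lt_right (Real.exp_pos 1))]
    refine max_le ?_ (Real.exp_le_exp.2 hQ')
    rw [← Real.exp_one_rpow, Real.rpow_natCast]
    refine pow_le_pow_left₀ (by norm_num) ?_ _
    have := Real.add_one_le_exp (1 : ℝ)
    linarith
  exact (plog_mono h1).trans (plog_le_self hQ')

lemma lam_eq : ∀ᶠ Q : ℕ in atTop, lam Q = Real.log (Q * Real.log 2) := by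
  have hl : 0 < Real.log 2 := Real.log_pos (by norm_num)
  have h1 : Tendsto (fun Q : ℕ => (Q : ℝ) * Real.log 2) atTop atTop :=
    tendsto_natCast_atTop_atTop.atTop_mul_const hl
  filter_upwards [h1.eventually_ge_atTop (Real.exp 1), h1.eventually_ge_atTop 1] with Q h2 h3
  have h4 : plog (2 ^ Q) = Q * Real.log 2 := by
    have : Real.log ((2 : ℝ) ^ Q) = Q * Real.log 2 := Real.log_pow _ _
    rw [plog_of_le, this]
    rw [← Real.le_log_iff_exp_le (by positivity), this]
    exact h3
  rw [lam, h4, plog_of_le h2]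

lemma exp_lam {c : ℝ} : ∀ᶠ Q : ℕ in atTop,
    Real.exp (-(c * lam Q)) = (Real.log 2) ^ (-c) * (Q : ℝ) ^ (-c) := by
  have hl : 0 < Real.log 2 := Real.log_pos (by norm_num)
  filter_upwards [lam_eq, eventually_ge_atTop 1] with Q h hQ
  have hQ' : (0 : ℝ) < Q := by exact_mod_cast hQ
  rw [h, ← Real.mul_rpow hl.le hQ'.le, mul_comm (Real.log 2),
    Real.rpow_def_of_pos (by positivity)]
  congr 1; ring

/-! ### Borel–Cantelli over dyadic blocks -/

/-- There are at most `(Q+1)^(d-1)` multi-indices of total degree `Q`. -/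
lemma tsum_tot_le {d : ℕ} (hd : d ≠ 0) (F : ℕ → ENNReal) :
    ∑' q : Fin d → ℕ, F (∑ i, q i) ≤ ∑' Q : ℕ, ((Q : ENNReal) + 1) ^ (d - 1) * F Q := by
  obtain ⟨e, rfl⟩ := Nat.exists_eq_succ_of_ne_zero hd
  have h1 : ∀ q : Fin (e + 1) → ℕ, F (∑ i, q i) =
      ∑' Q : ℕ, if Q = ∑ i, q i then F Q else 0 := fun q => by
    rw [tsum_ite_eq]
  simp only [Nat.succ_eq_add_one, h1]
  rw [ENNReal.tsum_comm]
  refine ENNReal.tsum_le_tsum fun Q => ?_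
  set S : Finset (Fin (e + 1) → ℕ) :=
    (Fintype.piFinset fun _ => Finset.range (Q + 1)).filter fun q => Q = ∑ i, q i with hS
  have hcard : S.card ≤ (Q + 1) ^ e := by
    have h2 : (Fintype.piFinset fun _ : Fin e => Finset.range (Q + 1)).card = (Q + 1) ^ e := by
      simp
    rw [← h2]
    refine Finset.card_le_card_of_injOn (fun q => Fin.tail q) ?_ ?_
    · intro q hq
      simp only [hS, Finset.coe_filter, Fintype.mem_piFinset, Set.mem_ofPred_eq] at hq
      simp only [Finset.mem_coe, Fintype.mem_piFinset]
      exact fun i => hq.1 i.succ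
    · intro q hq q' hq' h
      simp only [hS, Finset.coe_filter, Fintype.mem_piFinset, Set.mem_ofPred_eq] at hq hq'
      have e1 := hq.2
      have e2 := hq'.2
      rw [Fin.sum_univ_succ] at e1 e2
      have e3 : ∀ i : Fin e, q i.succ = q' i.succ := fun i => congrFun h i
      simp only [e3] at e1
      funext i
      refine Fin.cases ?_ (fun j => e3 j) i
      omega
  rw [tsum_eq_sum (s := S)]
  · refine (Finset.sum_le_card_nsmul S _ (F Q) fun q _ => ?_).trans ?_
    · split_ifs <;> simp
    · rw [nsmul_eq_mul]
      gcongr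
      exact_mod_cast hcard
  · intro q hq
    rw [if_neg]
    intro hQ
    apply hq
    simp only [hS, Finset.mem_filter, Fintype.mem_piFinset, Finset.mem_range]
    refine ⟨fun i => ?_, hQ⟩
    have := Finset.single_le_sum (f := q) (fun _ _ => Nat.zero_le _) (Finset.mem_univ i)
    omega

lemma tendsto_tot {d : ℕ} (hd : d ≠ 0) :
    Tendsto (fun q : Fin d → ℕ => ∑ i, q i) atTop atTop := by
  have i0 : Fin d := ⟨0, Nat.pos_of_ne_zero hd⟩
  refine tendsto_atTop_atTop.2 fun b => ⟨fun _ => b, fun q hq => ?_⟩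
  exact (hq i0).trans (Finset.single_le_sum (f := q) (fun _ _ => Nat.zero_le _)
    (Finset.mem_univ i0))

lemma borel_cantelli {Ω : Type} [MeasurableSpace Ω] {μ : Measure Ω} {d : ℕ} (hd : d ≠ 0)
    {E : (Fin d → ℕ) → Set Ω} {f : ℕ → ℝ}
    (hf : Summable fun Q : ℕ => ((Q : ℝ) + 1) ^ (d - 1) * f Q)
    (hE : ∀ᶠ q in atTop, μ (E q) ≤ ENNReal.ofReal (f (∑ i, q i))) :
    ∀ᵐ ω ∂μ, ∀ᶠ q in atTop, ω ∉ E q := by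
  classical
  obtain ⟨q0, hq0⟩ := eventually_atTop.1 hE
  have : NoTopOrder (Fin d → ℕ) := by
    have : Nonempty (Fin d) := ⟨⟨0, Nat.pos_of_ne_zero hd⟩⟩
    infer_instance
  have hfin : ∑' q, μ (if q0 ≤ q then E q else ∅) ≠ ⊤ := by
    refine ne_top_of_le_ne_top ?_ ((ENNReal.tsum_le_tsum fun q => ?_).trans
      (tsum_tot_le hd fun Q => ENNReal.ofReal (f Q)))
    · have h1 : ∀ Q : ℕ, ((Q : ENNReal) + 1) ^ (d - 1) * ENNReal.ofReal (f Q) =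
          ENNReal.ofReal (((Q : ℝ) + 1) ^ (d - 1) * f Q) := fun Q => by
        rw [ENNReal.ofReal_mul (by positivity), ENNReal.ofReal_pow (by positivity),
          ENNReal.ofReal_add (by positivity) zero_le_one]
        simp
      simp only [h1]
      exact hf.tsum_ofReal_ne_top
    · split_ifs with h
      · exact hq0 q h
      · simp
  filter_upwards [ae_finite_setOfPred_mem hfin] with ω hω
  have h1 : ∀ᶠ q in cofinite, ¬ (ω ∈ if q0 ≤ q then E q else ∅) := by
    rw [eventually_cofinite]
    simpa using hω
  filter_upwards [atTop_le_cofinite h1, eventually_ge_atTop q0] with q h2 h3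
  simpa [h3] using h2

/-- Borel–Cantelli with a polynomial rate: blocks of total degree `Q` have probability
`O(Q^(-r))` with `r > d`. -/
lemma borel_cantelli_rpow {Ω : Type} [MeasurableSpace Ω] {μ : Measure Ω} {d : ℕ} (hd : d ≠ 0)
    {E : (Fin d → ℕ) → Set Ω} {C r : ℝ} (hr : (d : ℝ) < r)
    (hE : ∀ᶠ q in atTop, μ (E q) ≤ ENNReal.ofReal (C * ((∑ i, q i : ℕ) : ℝ) ^ (-r))) :
    ∀ᵐ ω ∂μ, ∀ᶠ q in atTop, ω ∉ E q := by
  refine borel_cantelli (f := fun Q : ℕ => |C| * (Q : ℝ) ^ (-r)) hd ?_ ?_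
  · have h1 : Summable fun Q : ℕ => (2 ^ (d - 1) * |C|) * (Q : ℝ) ^ ((d : ℝ) - 1 - r) :=
      (Real.summable_nat_rpow.2 (by linarith)).mul_left _
    refine Summable.of_norm_bounded_eventually_nat h1 ?_
    filter_upwards [eventually_ge_atTop 1] with Q hQ
    have hQ' : (1 : ℝ) ≤ Q := by exact_mod_cast hQ
    rw [Real.norm_of_nonneg (by positivity)]
    have h2 : ((Q : ℝ) + 1) ^ (d - 1) ≤ 2 ^ (d - 1) * (Q : ℝ) ^ (d - 1) := by
      rw [← mul_pow]; exact pow_le_pow_left₀ (by positivity) (by linarith) _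
    have h3 : (Q : ℝ) ^ ((d : ℝ) - 1 - r) = (Q : ℝ) ^ (d - 1) * (Q : ℝ) ^ (-r) := by
      rw [← Real.rpow_natCast, ← Real.rpow_add (by linarith),
        Nat.cast_sub (Nat.one_le_iff_ne_zero.2 hd)]
      congr 1; push_cast; ring
    rw [h3]
    have h4 : 0 ≤ |C| * (Q : ℝ) ^ (-r) := by positivity
    nlinarith [mul_le_mul_of_nonneg_right h2 h4]
  · filter_upwards [hE] with q hq
    refine hq.trans (ENNReal.ofReal_le_ofReal ?_)
    exact mul_le_mul_of_nonneg_right (le_abs_self C) (by positivity)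

end

/-! ### Truncation levels and moment bounds -/

section

/-- The lower truncation level `2^(Q/2) / Q^(d+2)` on the scale `|n| ≈ 2^Q`. -/
def lowT (d Q : ℕ) : ℝ := √(2 ^ Q) / (Q : ℝ) ^ (d + 2)

/-- The upper truncation level `2^(Q/2) / Q^(1/8)` on the scale `|n| ≈ 2^Q`. -/
def highT (Q : ℕ) : ℝ := √(2 ^ Q) / (Q : ℝ) ^ (1 / 8 : ℝ)

/-- The truncation of `x` to the interval `[a, b]`. -/
def clamp (a b x : ℝ) : ℝ := max a (min x b)

lemma clamp_mono (a b : ℝ) : Monotone (clamp a b) := fun _ _ h =>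
  max_le_max_left _ (min_le_min_right _ h)

lemma le_clamp (a b x : ℝ) : a ≤ clamp a b x := le_max_left _ _

lemma clamp_le {a b : ℝ} (h : a ≤ b) (x : ℝ) : clamp a b x ≤ b := max_le h (min_le_right _ _)

lemma abs_clamp_le {B : ℝ} (hB : 0 ≤ B) (x : ℝ) : |clamp (-B) B x| ≤ |x| := by
  unfold clamp
  grind

lemma clamp_split {B b : ℝ} (hB : 0 < B) (hb : B ≤ b) (x : ℝ) :
    x = clamp (-B) B x + (clamp B b x - B) + (clamp (-b) (-B) x + B) +
      (x - clamp (-b) b x) := by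
  unfold clamp
  grind

lemma highLayer_zero {b x : ℝ} (h : |x| ≤ b) : x - clamp (-b) b x = 0 := by
  unfold clamp
  grind

lemma abs_highLayer_le {b : ℝ} (hb : 0 ≤ b) (x : ℝ) : |x - clamp (-b) b x| ≤ |x| := by
  unfold clamp
  grind

lemma posLayer_zero {B b x : ℝ} (hb : B ≤ b) (h : |x| ≤ B) : clamp B b x - B = 0 := by
  unfold clamp
  grind

lemma abs_posLayer_le {B b : ℝ} (hB : 0 ≤ B) (hb : B ≤ b) (x : ℝ) :
    |clamp B b x - B| ≤ |x| := by
  unfold clamp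
  grind

lemma negLayer_zero {B b x : ℝ} (hb : B ≤ b) (h : |x| ≤ B) : clamp (-b) (-B) x + B = 0 := by
  unfold clamp
  grind

lemma abs_negLayer_le {B b : ℝ} (hB : 0 ≤ B) (hb : B ≤ b) (x : ℝ) :
    |clamp (-b) (-B) x + B| ≤ |x| := by
  unfold clamp
  grind

lemma lowT_le_highT {d Q : ℕ} (hQ : 1 ≤ Q) : lowT d Q ≤ highT Q := by
  have hQ' : (1 : ℝ) ≤ Q := by exact_mod_cast hQ
  unfold lowT highT
  refine div_le_div_of_nonneg_left (Real.sqrt_nonneg _) (by positivity) ?_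
  rw [← Real.rpow_natCast]
  refine Real.rpow_le_rpow_of_exponent_le hQ' ?_
  push_cast
  have : (0 : ℝ) ≤ d := Nat.cast_nonneg d
  linarith

lemma exp_le_lowT (d : ℕ) : ∀ᶠ Q : ℕ in atTop, Real.exp (Q / 16) ≤ lowT d Q := by
  have h1 : ∀ᶠ x : ℝ in atTop, x ^ (d + 2) ≤ Real.exp (1 / 16 * x) := by
    have := (isLittleO_pow_exp_pos_mul_atTop (d + 2) (b := 1 / 16) (by norm_num)).bound
      (c := 1) one_pos
    filter_upwards [this, eventually_ge_atTop 0] with x hx hx0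
    simpa [abs_of_nonneg hx0] using hx
  filter_upwards [tendsto_natCast_atTop_atTop.eventually h1, eventually_ge_atTop 1] with Q hQ hQ1
  have hQ' : (0 : ℝ) < Q := by exact_mod_cast hQ1
  unfold lowT
  rw [le_div_iff₀ (by positivity)]
  refine (mul_le_mul_of_nonneg_left hQ (Real.exp_pos _).le).trans ?_
  refine Real.le_sqrt_of_sq_le ?_
  rw [← Real.exp_add, ← Real.exp_nat_mul]
  have h2 : ((2 : ℕ) : ℝ) * ((Q : ℝ) / 16 + 1 / 16 * Q) = Q * (1 / 4) := by push_cast; ring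
  rw [h2, Real.exp_nat_mul]
  refine pow_le_pow_left₀ (Real.exp_pos _).le ?_ _
  have h3 : Real.exp (1 / 4) ^ 4 ≤ 2 ^ 4 := by
    rw [← Real.exp_nat_mul]
    norm_num
    have := Real.exp_one_lt_d9
    linarith
  exact le_of_pow_le_pow_left₀ (by norm_num) (by norm_num) h3

lemma sqrt_plog_ge {Q : ℕ} {a : ℝ} (h : Real.exp (Q / 16) ≤ a) : √Q / 4 ≤ √(plog a) := by
  have h1 : (Q : ℝ) / 16 ≤ plog a := by
    refine ((Real.le_log_iff_exp_le ((Real.exp_pos _).trans_le h)).2 h).trans ?_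
    exact log_le_plog ((Real.exp_pos _).trans_le h)
  refine Real.le_sqrt_of_sq_le ?_
  rw [div_pow, Real.sq_sqrt (Nat.cast_nonneg _)]
  linarith

variable {Ω : Type} [MeasurableSpace Ω] {μ : Measure Ω} [IsProbabilityMeasure μ] {d : ℕ}
  {X : (Fin d → ℕ) → Ω → ℝ}

/-- The weakened moment `E[X² (log|X|)^(1/2)]`, which is all that the truncation needs. -/
def wMom (μ : Measure Ω) (X : (Fin d → ℕ) → Ω → ℝ) : ℝ :=
  ∫ ω, (X 1 ω) ^ 2 * √(plog |X 1 ω|) ∂μ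

lemma wMom_nonneg : 0 ≤ wMom μ X := integral_nonneg fun _ => by positivity

/-- A generic tail estimate: `F(x) ≤ x² / c` for `|x| > a` and `F(x) ≤ 0` for `|x| ≤ a`. -/
lemma integral_tail_le (hW : Integrable (fun ω => (X 1 ω) ^ 2 * √(plog |X 1 ω|)) μ)
    {F : ℝ → ℝ} {a c D : ℝ} (hc : 0 < c) (hD : 0 < D) (hDa : D ≤ √(plog a))
    (h0 : ∀ x, 0 ≤ F x) (h1 : ∀ x, |x| ≤ a → F x = 0) (h2 : ∀ x, a < |x| → F x ≤ x ^ 2 / c) :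
    ∫ ω, F (X 1 ω) ∂μ ≤ wMom μ X / (c * D) := by
  rw [wMom, ← integral_div]
  refine integral_mono_of_nonneg (Eventually.of_forall fun _ => h0 _) (hW.div_const _)
    (Eventually.of_forall fun ω => ?_)
  simp only
  rcases le_or_gt |X 1 ω| a with h | h
  · rw [h1 _ h]; positivity
  · refine (h2 _ h).trans ?_
    rw [div_le_div_iff₀ hc (by positivity)]
    have h3 : D ≤ √(plog |X 1 ω|) := hDa.trans (Real.sqrt_le_sqrt (plog_mono h.le))
    have : 0 ≤ (X 1 ω) ^ 2 * c := by positivity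
    nlinarith [mul_le_mul_of_nonneg_left h3 this]

lemma tail_sq (hW : Integrable (fun ω => (X 1 ω) ^ 2 * √(plog |X 1 ω|)) μ)
    {h : ℝ → ℝ} {a : ℝ} {Q : ℕ} (hQ : 1 ≤ Q) (ha : Real.exp (Q / 16) ≤ a)
    (h1 : ∀ x, |x| ≤ a → h x = 0) (h2 : ∀ x, |h x| ≤ |x|) :
    ∫ ω, (h (X 1 ω)) ^ 2 ∂μ ≤ 4 * wMom μ X / √Q := by
  have hQ' : (0 : ℝ) < Q := by exact_mod_cast hQ
  have := integral_tail_le hW (F := fun x => h x ^ 2) (c := 1) (D := √Q / 4) one_pos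
    (by positivity) (sqrt_plog_ge ha) (fun x => sq_nonneg _)
    (fun x hx => by simp [h1 x hx]) (fun x _ => by rw [div_one]; exact sq_le_sq.2 (h2 x))
  refine this.trans (le_of_eq ?_)
  field_simp

lemma tail_abs (hW : Integrable (fun ω => (X 1 ω) ^ 2 * √(plog |X 1 ω|)) μ)
    {h : ℝ → ℝ} {a : ℝ} {Q : ℕ} (hQ : 1 ≤ Q) (ha : Real.exp (Q / 16) ≤ a)
    (h1 : ∀ x, |x| ≤ a → h x = 0) (h2 : ∀ x, |h x| ≤ |x|) :
    |∫ ω, h (X 1 ω) ∂μ| ≤ 4 * wMom μ X / (a * √Q) := by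
  have hQ' : (0 : ℝ) < Q := by exact_mod_cast hQ
  have ha0 : 0 < a := (Real.exp_pos _).trans_le ha
  have := integral_tail_le hW (F := fun x => |h x|) (c := a) (D := √Q / 4) ha0
    (by positivity) (sqrt_plog_ge ha) (fun x => abs_nonneg _)
    (fun x hx => by simp [h1 x hx]) (fun x hx => by
      rw [le_div_iff₀ ha0, ← sq_abs x, sq]
      exact mul_le_mul (h2 x) hx.le ha0.le (abs_nonneg _))
  refine (abs_integral_le_integral_abs).trans (this.trans (le_of_eq ?_))
  field_simp

lemma tail_prob (hX : Measurable (X 1))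
    (hW : Integrable (fun ω => (X 1 ω) ^ 2 * √(plog |X 1 ω|)) μ)
    {a : ℝ} {Q : ℕ} (hQ : 1 ≤ Q) (ha : Real.exp (Q / 16) ≤ a) :
    μ.real {ω | a < |X 1 ω|} ≤ 4 * wMom μ X / (a ^ 2 * √Q) := by
  have hQ' : (0 : ℝ) < Q := by exact_mod_cast hQ
  have ha0 : 0 < a := (Real.exp_pos _).trans_le ha
  have := integral_tail_le hW (F := fun x => Set.indicator {x : ℝ | a < |x|} 1 x) (c := a ^ 2)
    (D := √Q / 4) (by positivity)
    (by positivity) (sqrt_plog_ge ha) (fun x => Set.indicator_nonneg (by simp) _)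
    (fun x hx => by simp [hx]) (fun x hx => by
      simp only [Set.indicator, Set.mem_ofPred_eq, hx, if_true, Pi.one_apply]
      rw [le_div_iff₀ (by positivity), ← sq_abs x, one_mul]
      exact pow_le_pow_left₀ ha0.le hx.le 2)
  have h3 : ∫ ω, Set.indicator {x : ℝ | a < |x|} 1 (X 1 ω) ∂μ = μ.real {ω | a < |X 1 ω|} := by
    rw [← integral_indicator_one]
    · rfl
    · exact measurableSet_lt measurable_const hX.abs
  rw [← h3]
  refine this.trans (le_of_eq ?_)
  field_simp

/-- The variance is at most the second moment. -/
lemma integral_centered_sq_le {Y : Ω → ℝ} (h1 : Integrable Y μ)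
    (h2 : Integrable (fun ω => Y ω ^ 2) μ) :
    ∫ ω, (Y ω - ∫ ω', Y ω' ∂μ) ^ 2 ∂μ ≤ ∫ ω, Y ω ^ 2 ∂μ := by
  set m := ∫ ω', Y ω' ∂μ with hm
  have h3 : ∀ ω, (Y ω - m) ^ 2 = Y ω ^ 2 - (2 * m) * Y ω + m ^ 2 := fun ω => by ring
  simp only [h3]
  have h4 : Integrable (fun ω => Y ω ^ 2 - (2 * m) * Y ω) μ := h2.sub (h1.const_mul _)
  rw [integral_add h4 (integrable_const _), integral_sub h2 (h1.const_mul _), integral_const_mul, ← hm]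
  simp
  nlinarith [sq_nonneg m]

/-- A bounded function stays within its range of its mean. -/
lemma abs_sub_mean_le (H : NAField μ X) {g : ℝ → ℝ} (hg : Measurable g) {a b : ℝ}
    (h1 : ∀ x, a ≤ g x) (h2 : ∀ x, g x ≤ b) (x : ℝ) :
    |g x - ∫ ω, g (X 1 ω) ∂μ| ≤ b - a := by
  have hi : Integrable (fun ω => g (X 1 ω)) μ :=
    H.integrable_comp le_rfl hg (C := max |a| |b|) fun x =>
      abs_le_max_abs_abs (h1 x) (h2 x)
  have e1 : a ≤ ∫ ω, g (X 1 ω) ∂μ := by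
    have := integral_mono (integrable_const a) hi fun ω => h1 (X 1 ω)
    simpa using this
  have e2 : ∫ ω, g (X 1 ω) ∂μ ≤ b := by
    have := integral_mono hi (integrable_const b) fun ω => h2 (X 1 ω)
    simpa using this
  rw [abs_le]
  constructor <;> linarith [h1 x, h2 x]

end

/-! ### Dyadic chaining of rectangles -/

section

/-- The `l`-th one-dimensional chaining interval. With `r = q - s - l` and `a = ⌊n / 2^r⌋` it is
`(0, a 2^r]` for `l = 0`, and for `l > 0` the interval between the roundings of `n` to multiples
of `2^(r+1)` and of `2^r`. -/
def chainI (q s l a : ℕ) : Finset ℕ :=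
  if l = 0 then Ioc 0 (a * 2 ^ (q - s)) else Ioc (a / 2 * 2 ^ (q - s - l + 1)) (a * 2 ^ (q - s - l))

/-- Products of chaining intervals. -/
def chainRect {d : ℕ} (q : Fin d → ℕ) (s : ℕ) (l a : Fin d → ℕ) : Finset (Fin d → ℕ) :=
  Fintype.piFinset fun i => chainI (q i) s (l i) (a i)

/-- The chaining intervals up to level `L` partition `(0, n']`, where `n'` is `n` rounded down to a
multiple of `2^(q - s - L)`; the statement is in terms of indicator functions. -/
lemma sum_chainI_aux {q s : ℕ} (n x : ℕ) {L : ℕ} (hL : L ≤ q - s) :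
    (∑ l ∈ range (L + 1), if x ∈ chainI q s l (n / 2 ^ (q - s - l)) then (1 : ℝ) else 0) =
      if x ∈ Ioc 0 (n / 2 ^ (q - s - L) * 2 ^ (q - s - L)) then 1 else 0 := by
  induction L with
  | zero => simp [chainI]
  | succ L ih =>
    rw [Finset.sum_range_succ, ih (by omega)]
    obtain ⟨r, hr⟩ : ∃ r, r = q - s - (L + 1) := ⟨_, rfl⟩
    have h1 : q - s - L = r + 1 := by omega
    rw [← hr, h1]
    have h2 : chainI q s (L + 1) (n / 2 ^ r) =
        Ioc (n / 2 ^ r / 2 * 2 ^ (r + 1)) (n / 2 ^ r * 2 ^ r) := by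
      simp [chainI, ← hr]
    have h3 : n / 2 ^ (r + 1) = n / 2 ^ r / 2 := by rw [pow_succ, Nat.div_div_eq_div_mul]
    have h4 : n / 2 ^ r / 2 * 2 ^ (r + 1) ≤ n / 2 ^ r * 2 ^ r := by
      rw [pow_succ, mul_comm (2 ^ r) 2, ← mul_assoc]
      exact Nat.mul_le_mul_right _ (Nat.div_mul_le_self _ _)
    rw [h2, h3]
    simp only [mem_Ioc]
    generalize n / 2 ^ r / 2 * 2 ^ (r + 1) = u at *
    generalize n / 2 ^ r * 2 ^ r = w at *
    by_cases hx1 : x ≤ u <;> by_cases hx2 : x ≤ w <;> by_cases hx3 : 0 < x <;>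
      simp [hx1, hx2, hx3] <;> omega

lemma chainI_subset {q s l n : ℕ} : chainI q s l (n / 2 ^ (q - s - l)) ⊆ Icc 1 n := by
  intro x hx
  have h := Nat.div_mul_le_self n (2 ^ (q - s - l))
  unfold chainI at hx
  split_ifs at hx with h0
  · subst h0
    simp only [mem_Ioc, mem_Icc, Nat.sub_zero] at *
    omega
  · simp only [mem_Ioc, mem_Icc] at *
    omega

lemma chainI_pos {q s l a x : ℕ} (hx : x ∈ chainI q s l a) : 1 ≤ x := by
  unfold chainI at hx
  split_ifs at hx <;> simp only [mem_Ioc] at hx <;> omega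

lemma chainRect_pos {d : ℕ} {q : Fin d → ℕ} {s : ℕ} {l a k : Fin d → ℕ}
    (hk : k ∈ chainRect q s l a) : 1 ≤ k := fun i =>
  chainI_pos (Fintype.mem_piFinset.1 hk i)

/-- The index at level `l` of the chaining rectangle belonging to `n`. -/
def chainIdx {d : ℕ} (q : Fin d → ℕ) (s : ℕ) (l n : Fin d → ℕ) : Fin d → ℕ :=
  fun i => n i / 2 ^ (q i - s - l i)

/-- The chaining identity: the rectangles `chainRect q s l (chainIdx q s l n)` partition the box
`[1, n]`, because in each direction the chaining intervals partition `[1, n i]`. -/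
lemma sum_chain {d : ℕ} (q : Fin d → ℕ) (s : ℕ) (n : Fin d → ℕ) (y : (Fin d → ℕ) → ℝ) :
    ∑ k ∈ Icc 1 n, y k = ∑ l ∈ Fintype.piFinset (fun i => range (q i - s + 1)),
      ∑ k ∈ chainRect q s l (chainIdx q s l n), y k := by
  have h1 : ∀ l : Fin d → ℕ, ∑ k ∈ chainRect q s l (chainIdx q s l n), y k =
      ∑ k ∈ Icc 1 n, y k * ∏ i, if k i ∈ chainI (q i) s (l i) (n i / 2 ^ (q i - s - l i))
        then (1 : ℝ) else 0 := by
    intro l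
    have hsub : chainRect q s l (chainIdx q s l n) ⊆ Icc 1 n := by
      intro k hk
      rw [Finset.mem_Icc]
      constructor
      · exact chainRect_pos hk
      · intro i
        exact (Finset.mem_Icc.1 (chainI_subset (Fintype.mem_piFinset.1 hk i))).2
    rw [← Finset.sum_subset hsub (f := fun k => y k * ∏ i,
      if k i ∈ chainI (q i) s (l i) (n i / 2 ^ (q i - s - l i)) then (1 : ℝ) else 0)]
    · refine Finset.sum_congr rfl fun k hk => ?_
      rw [Finset.prod_eq_one, mul_one]
      intro i _
      rw [if_pos]
      exact Fintype.mem_piFinset.1 hk i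
    · intro k _ hk
      have : ∃ i, k i ∉ chainI (q i) s (l i) (n i / 2 ^ (q i - s - l i)) := by
        by_contra hcon
        push Not at hcon
        exact hk (Fintype.mem_piFinset.2 hcon)
      obtain ⟨i, hi⟩ := this
      rw [Finset.prod_eq_zero (Finset.mem_univ i) (by rw [if_neg hi]), mul_zero]
  simp only [h1]
  rw [Finset.sum_comm]
  refine Finset.sum_congr rfl fun k hk => ?_
  rw [← Finset.mul_sum, ← Finset.prod_univ_sum (fun i => range (q i - s + 1))
    (fun i l => if k i ∈ chainI (q i) s l (n i / 2 ^ (q i - s - l)) then (1 : ℝ) else 0)]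
  rw [Finset.prod_eq_one, mul_one]
  intro i _
  rw [sum_chainI_aux _ _ le_rfl]
  have := Finset.mem_Icc.1 hk
  have h2 := this.1 i
  have h3 := this.2 i
  rw [Nat.sub_self, pow_zero, Nat.div_one, mul_one, if_pos]
  exact Finset.mem_Ioc.2 ⟨h2, h3⟩

lemma card_chainI {q s l a : ℕ} (hs : s ≤ q) (hl : l ≤ q - s) (ha : a < 2 ^ (s + l + 1)) :
    ((chainI q s l a).card : ℝ) ≤ 2 ^ (q + 1) / 2 ^ l * if l = 0 then 1 else (2 ^ s)⁻¹ := by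
  unfold chainI
  split_ifs with h0
  · subst h0
    simp only [Nat.card_Ioc, pow_zero, div_one, mul_one, Nat.sub_zero]
    have : a * 2 ^ (q - s) ≤ 2 ^ (q + 1) := by
      calc a * 2 ^ (q - s) ≤ 2 ^ (s + 0 + 1) * 2 ^ (q - s) := Nat.mul_le_mul_right _ ha.le
        _ = 2 ^ (q + 1) := by rw [← pow_add]; congr 1; omega
    exact_mod_cast this
  · obtain ⟨r, hr⟩ : ∃ r, q = s + l + r := ⟨q - s - l, by omega⟩
    have h1 : q - s - l = r := by omega
    rw [h1, Nat.card_Ioc]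
    have h2 : a * 2 ^ r - a / 2 * 2 ^ (r + 1) ≤ 2 ^ r := by
      have : a ≤ a / 2 * 2 + 1 := by omega
      have := Nat.mul_le_mul_right (2 ^ r) this
      rw [pow_succ]
      have e : a / 2 * (2 ^ r * 2) = a / 2 * 2 * 2 ^ r := by ring
      rw [e]
      rw [add_mul] at this
      omega
    have h3 : ((a * 2 ^ r - a / 2 * 2 ^ (r + 1) : ℕ) : ℝ) ≤ 2 ^ r := by exact_mod_cast h2
    refine h3.trans ?_
    have h4 : (2 : ℝ) ^ (q + 1) / 2 ^ l * (2 ^ s)⁻¹ = 2 * 2 ^ r := by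
      rw [hr, pow_succ, pow_add, pow_add]; field_simp
    rw [h4]
    have : (0 : ℝ) < 2 ^ r := by positivity
    linarith

/-- A rectangle of level `l ≠ 0` is smaller than the block by the factor `2^(-|l|)`, and by a further
factor `2^(-s)` coming from a direction with `l i ≠ 0`. -/
lemma card_chainRect {d : ℕ} {q : Fin d → ℕ} {s : ℕ} {l a : Fin d → ℕ} (hs : ∀ i, s ≤ q i)
    (hl : ∀ i, l i ≤ q i - s) (ha : ∀ i, a i < 2 ^ (s + l i + 1)) (hl0 : l ≠ 0) :
    ((chainRect q s l a).card : ℝ) ≤ 2 ^ d * 2 ^ (∑ i, q i) / 2 ^ (∑ i, l i) / 2 ^ s := by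
  obtain ⟨i0, hi0⟩ := Function.ne_iff.1 hl0
  simp only [Pi.zero_apply] at hi0
  rw [chainRect, Fintype.card_piFinset]
  push_cast
  calc ∏ i, ((chainI (q i) s (l i) (a i)).card : ℝ)
      ≤ ∏ i, (2 * 2 ^ q i / 2 ^ l i * if i = i0 then (2 ^ s)⁻¹ else 1) := by
        refine Finset.prod_le_prod (fun _ _ => Nat.cast_nonneg _) fun i _ => ?_
        refine (card_chainI (hs i) (hl i) (ha i)).trans ?_
        rw [pow_succ, mul_comm ((2 : ℝ) ^ q i) 2]
        refine mul_le_mul_of_nonneg_left ?_ (by positivity)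
        have h1 : ((2 : ℝ) ^ s)⁻¹ ≤ 1 := inv_le_one_of_one_le₀ (one_le_pow₀ (by norm_num))
        split_ifs with h2 h3 h3
        · subst h3; exact absurd h2 hi0
        · exact le_rfl
        · exact le_rfl
        · exact h1
    _ = _ := by
        rw [Finset.prod_mul_distrib, Finset.prod_ite_eq' ]
        simp only [Finset.mem_univ, if_true, Finset.prod_div_distrib, Finset.prod_mul_distrib,
          Finset.prod_const, Finset.card_univ, Fintype.card_fin, Finset.prod_pow_eq_pow_sum]
        ring

end

/-! ### Fluctuations of the lowest layer inside a block -/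

section

variable {Ω : Type} [MeasurableSpace Ω] {μ : Measure Ω} [IsProbabilityMeasure μ] {d : ℕ}
  {X : (Fin d → ℕ) → Ω → ℝ}

/-- Bernstein's inequality in inverted form. The Chernoff parameter is
`t = (M + √(vN/u))⁻¹`. -/
lemma NAField.bernstein_inv (H : NAField μ X) {g : ℝ → ℝ} (hg : Monotone g) {m M v u N : ℝ}
    (hm : m = ∫ ω, g (X 1 ω) ∂μ) (hM : ∀ x, |g x - m| ≤ M)
    (hv : ∫ ω, (g (X 1 ω) - m) ^ 2 ∂μ ≤ v) (hM0 : 0 < M) (hu : 0 < u) (hN0 : 0 ≤ N)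
    {A : Finset (Fin d → ℕ)} (hA : ∀ k ∈ A, 1 ≤ k) (hN : (A.card : ℝ) ≤ N) :
    μ {ω | 2 * √(u * v * N) + u * M ≤ |∑ k ∈ A, (g (X k ω) - m)|} ≤
      ENNReal.ofReal (2 * Real.exp (-u)) := by
  have hv0 : 0 ≤ v := (integral_nonneg fun _ => sq_nonneg _).trans hv
  set w := √(v * N / u) with hw
  have hw0 : 0 ≤ w := Real.sqrt_nonneg _
  have hw2 : N * v = u * w ^ 2 := by
    rw [hw, Real.sq_sqrt (by positivity)]; field_simp
  have hw3 : √(u * v * N) = u * w := by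
    rw [show u * v * N = (u * w) ^ 2 by rw [mul_assoc, mul_comm v N, hw2]; ring]
    exact Real.sqrt_sq (by positivity)
  set t := (M + w)⁻¹ with ht
  have ht0 : 0 < t := by positivity
  have ht1 : t * M + t * w = 1 := by rw [← mul_add, ht]; exact inv_mul_cancel₀ (by positivity)
  have htw : 0 ≤ t * w := by positivity
  have htM : 0 ≤ t * M := by positivity
  refine (H.bernstein hg hm hM hv ht0.le (by linarith) hA hN).trans
    (ENNReal.ofReal_le_ofReal ?_)
  refine mul_le_mul_of_nonneg_left (Real.exp_le_exp.2 ?_) zero_le_two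
  rw [hw3, hw2]
  have e1 : t * (2 * (u * w) + u * M) = u + u * (t * w) := by
    have : t * M = 1 - t * w := by linarith
    calc t * (2 * (u * w) + u * M) = 2 * u * (t * w) + u * (t * M) := by ring
      _ = _ := by rw [this]; ring
  have e2 : u * w ^ 2 * t ^ 2 * ((1 + t * M) / 2) ≤ u * (t * w) := by
    have h1 : (t * w) ^ 2 * ((1 + t * M) / 2) ≤ (t * w) := by nlinarith
    calc u * w ^ 2 * t ^ 2 * ((1 + t * M) / 2) = u * ((t * w) ^ 2 * ((1 + t * M) / 2)) := by ring
      _ ≤ _ := mul_le_mul_of_nonneg_left h1 hu.le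
  rw [e1]
  linarith

lemma integrable_sq_of_wMom (hX : Measurable (X 1))
    (hW : Integrable (fun ω => (X 1 ω) ^ 2 * √(plog |X 1 ω|)) μ) :
    Integrable (fun ω => (X 1 ω) ^ 2) μ := by
  refine hW.mono' (hX.pow_const 2).aestronglyMeasurable (Eventually.of_forall fun ω => ?_)
  rw [Real.norm_of_nonneg (sq_nonneg _)]
  have : 1 ≤ √(plog |X 1 ω|) := Real.one_le_sqrt.2 (one_le_plog _)
  nlinarith [sq_nonneg (X 1 ω)]

/-- A bounded-by-identity truncation has variance at most `E[X²]`. -/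
lemma variance_trunc_le (H : NAField μ X)
    (hW : Integrable (fun ω => (X 1 ω) ^ 2 * √(plog |X 1 ω|)) μ) {g : ℝ → ℝ}
    (hg : Measurable g) (hgx : ∀ x, |g x| ≤ |x|) {C : ℝ} (hC : ∀ x, |g x| ≤ C) :
    ∫ ω, (g (X 1 ω) - ∫ ω', g (X 1 ω') ∂μ) ^ 2 ∂μ ≤ ∫ ω, (X 1 ω) ^ 2 ∂μ := by
  have h2 : Integrable (fun ω => (g (X 1 ω)) ^ 2) μ :=
    H.integrable_comp (h := fun x => g x ^ 2) le_rfl (hg.pow_const 2) (C := C ^ 2) fun x => by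
      rw [abs_pow]; exact pow_le_pow_left₀ (abs_nonneg _) (hC x) 2
  refine (integral_centered_sq_le (H.integrable_comp le_rfl hg hC) h2).trans ?_
  exact integral_mono h2 (integrable_sq_of_wMom (H.meas 1 le_rfl) hW) fun ω => sq_le_sq.2 (hgx _)

lemma lowT_pos {Q : ℕ} (hQ : 1 ≤ Q) : 0 < lowT d Q := by
  have : (0 : ℝ) < Q := by exact_mod_cast hQ
  unfold lowT; positivity

lemma one_add_sum_le_prod {ι : Type*} (s : Finset ι) (f : ι → ℝ) (hf : ∀ i, 0 ≤ f i) :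
    1 + ∑ i ∈ s, f i ≤ ∏ i ∈ s, (1 + f i) := by
  classical
  induction s using Finset.induction_on with
  | empty => simp
  | insert j s hj ih =>
    rw [Finset.sum_insert hj, Finset.prod_insert hj]
    have h1 : 0 ≤ ∑ i ∈ s, f i := Finset.sum_nonneg fun i _ => hf i
    nlinarith [hf j, mul_nonneg (hf j) h1, mul_le_mul_of_nonneg_left ih (hf j)]

/-- The chaining series converges: `Σ_l (1 + |l|) 2^(-|l|/2)` is bounded over all finite boxes of
multi-indices. -/
lemma chain_series (d : ℕ) : ∃ G : ℝ, 0 < G ∧ ∀ T : Fin d → ℕ,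
    ∑ l ∈ Fintype.piFinset (fun i => range (T i)),
      (1 + ((∑ i, l i : ℕ) : ℝ)) * (√2)⁻¹ ^ (∑ i, l i) ≤ G := by
  have hr0 : (0 : ℝ) < (√2)⁻¹ := by positivity
  have hr : (√2)⁻¹ < 1 := by
    refine inv_lt_one_of_one_lt₀ ?_
    exact Real.lt_sqrt_of_sq_lt (by norm_num)
  have hsum : Summable fun j : ℕ => (1 + (j : ℝ)) * (√2)⁻¹ ^ j := by
    have h1 := summable_geometric_of_lt_one hr0.le hr
    have h2 := summable_pow_mul_geometric_of_norm_lt_one (R := ℝ) 1 (r := (√2)⁻¹)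
      (by rwa [Real.norm_of_nonneg hr0.le])
    refine (h1.add h2).congr fun j => ?_
    simp only [pow_one]; ring
  set G := ∑' j : ℕ, (1 + (j : ℝ)) * (√2)⁻¹ ^ j with hG
  have hG1 : 0 ≤ G := tsum_nonneg fun j => by positivity
  refine ⟨G ^ d + 1, by positivity, fun T => ?_⟩
  calc ∑ l ∈ Fintype.piFinset (fun i => range (T i)),
        (1 + ((∑ i, l i : ℕ) : ℝ)) * (√2)⁻¹ ^ (∑ i, l i)
      ≤ ∑ l ∈ Fintype.piFinset (fun i => range (T i)),
        ∏ i, ((1 + (l i : ℝ)) * (√2)⁻¹ ^ (l i)) := by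
        refine Finset.sum_le_sum fun l _ => ?_
        rw [Finset.prod_mul_distrib, Finset.prod_pow_eq_pow_sum]
        refine mul_le_mul_of_nonneg_right ?_ (by positivity)
        push_cast
        exact one_add_sum_le_prod _ _ fun i => Nat.cast_nonneg _
    _ = ∏ i, ∑ j ∈ range (T i), (1 + (j : ℝ)) * (√2)⁻¹ ^ j := by
        rw [Finset.prod_univ_sum]
    _ ≤ ∏ _i : Fin d, G := by
        refine Finset.prod_le_prod (fun i _ => Finset.sum_nonneg fun j _ => by positivity)
          fun i _ => ?_
        exact hsum.sum_le_tsum _ fun j _ => by positivity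
    _ = G ^ d := by simp
    _ ≤ _ := by linarith

/-- `n` lies in the dyadic block with exponents `q`. -/
def InBlock (q n : Fin d → ℕ) : Prop := ∀ i, 2 ^ q i ≤ n i ∧ n i < 2 ^ (q i + 1)

/-- The centred lowest layer of `X k` at scale `Q`. -/
def lowY (μ : Measure Ω) (X : (Fin d → ℕ) → Ω → ℝ) (Q : ℕ) (k : Fin d → ℕ) (ω : Ω) : ℝ :=
  clamp (-lowT d Q) (lowT d Q) (X k ω) - ∫ ω', clamp (-lowT d Q) (lowT d Q) (X 1 ω') ∂μ

/-- The exceedance level used for the chaining rectangles of level `l`, with `j = |l|`. It is the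
level of `NAField.bernstein_inv` for `u = κ log log 2^Q + j`. -/
def chainLevel (κ v : ℝ) (d s Q j : ℕ) : ℝ :=
  2 * √((κ * lam Q + j) * v * (2 ^ d * 2 ^ Q / 2 ^ j / 2 ^ s)) +
    (κ * lam Q + j) * (2 * lowT d Q)

lemma chainLevel_le {κ v : ℝ} (hκ : 1 ≤ κ) (hv : 0 ≤ v) {s Q j : ℕ} (hQ : 1 ≤ Q)
    (hj : j ≤ d * Q) : chainLevel κ v d s Q j ≤
      2 * √(κ * v * 2 ^ d / 2 ^ s) * (√(2 ^ Q) * √(lam Q)) * ((1 + (j : ℝ)) * (√2)⁻¹ ^ j) +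
      2 * (κ + d) * (Q * lowT d Q) := by
  have hl := one_le_lam Q
  have hj0 : (0 : ℝ) ≤ j := Nat.cast_nonneg j
  have hB := lowT_pos (d := d) hQ
  have h1 : √((κ * lam Q + j) * v * (2 ^ d * 2 ^ Q / 2 ^ j / 2 ^ s)) ≤
      √(κ * v * 2 ^ d / 2 ^ s) * (√(2 ^ Q) * √(lam Q)) * ((1 + (j : ℝ)) * (√2)⁻¹ ^ j) := by
    refine Real.sqrt_le_iff.2 ⟨by positivity, ?_⟩
    have hκl : 1 ≤ κ * lam Q := by nlinarith
    have e1 : κ * lam Q + j ≤ κ * lam Q * (1 + (j : ℝ)) ^ 2 := by nlinarith [mul_nonneg hj0 hj0]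
    have e2 : (√(κ * v * 2 ^ d / 2 ^ s) * (√(2 ^ Q) * √(lam Q)) *
        ((1 + (j : ℝ)) * (√2)⁻¹ ^ j)) ^ 2 =
        (κ * lam Q * (1 + (j : ℝ)) ^ 2) * v * (2 ^ d * 2 ^ Q / 2 ^ j / 2 ^ s) := by
      have e3 : ((√2)⁻¹ ^ j) ^ 2 = ((2 : ℝ) ^ j)⁻¹ := by
        rw [← pow_mul, mul_comm, pow_mul, inv_pow, Real.sq_sqrt (by norm_num), inv_pow]
      rw [mul_pow, mul_pow, mul_pow, mul_pow, Real.sq_sqrt (by positivity),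
        Real.sq_sqrt (by positivity), Real.sq_sqrt (by positivity), e3]
      field_simp
    rw [e2]
    gcongr
  have h2 : κ * lam Q + j ≤ (κ + d) * Q := by
    have e1 := lam_le hQ
    have e2 : (j : ℝ) ≤ d * Q := by exact_mod_cast hj
    nlinarith
  unfold chainLevel
  nlinarith [mul_le_mul_of_nonneg_right h2 hB.le]

/-- Union bound over all chaining rectangles of a block, except those of level `0`. -/
lemma chain_prob (H : NAField μ X)
    (hW : Integrable (fun ω => (X 1 ω) ^ 2 * √(plog |X 1 ω|)) μ) {κ v : ℝ} (hκ : 1 ≤ κ)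
    (hv : ∫ ω, (X 1 ω) ^ 2 ∂μ ≤ v) {s : ℕ} {q : Fin d → ℕ} (hs : ∀ i, s ≤ q i)
    (hQ : 1 ≤ ∑ i, q i) :
    μ (⋃ l ∈ (Fintype.piFinset (fun i => range (q i - s + 1))).erase 0,
      ⋃ a ∈ Fintype.piFinset (fun i => range (2 ^ (s + l i + 1))),
        {ω | chainLevel κ v d s (∑ i, q i) (∑ i, l i) ≤
          |∑ k ∈ chainRect q s l a, lowY μ X (∑ i, q i) k ω|}) ≤
      ENNReal.ofReal ((2 * 2 ^ (d * (s + 1))) * (((∑ i, q i : ℕ) : ℝ) + 1) ^ d *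
        Real.exp (-(κ * lam (∑ i, q i)))) := by
  set Q := ∑ i, q i with hQdef
  have hB := lowT_pos (d := d) hQ
  have hl := one_le_lam Q
  have hrect : ∀ l ∈ (Fintype.piFinset (fun i => range (q i - s + 1))).erase 0,
      ∀ a ∈ Fintype.piFinset (fun i => range (2 ^ (s + l i + 1))),
      μ {ω | chainLevel κ v d s Q (∑ i, l i) ≤ |∑ k ∈ chainRect q s l a, lowY μ X Q k ω|} ≤
        ENNReal.ofReal (2 * Real.exp (-(κ * lam Q + (∑ i, l i : ℕ)))) := by
    intro l hlm a ha
    rw [Finset.mem_erase, Fintype.mem_piFinset] at hlm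
    rw [Fintype.mem_piFinset] at ha
    have hcl : ∀ x, |clamp (-lowT d Q) (lowT d Q) x| ≤ lowT d Q := fun x =>
      abs_le.2 ⟨le_clamp _ _ _, clamp_le (by linarith) _⟩
    refine H.bernstein_inv (clamp_mono (-lowT d Q) (lowT d Q)) rfl
      (M := 2 * lowT d Q) (v := v) (fun x => ?_) ?_ (by positivity) ?_ (by positivity)
      (fun k hk => chainRect_pos hk)
      (card_chainRect hs (fun i => ?_) (fun i => by simpa using ha i) hlm.1)
    · refine (abs_sub_mean_le H (clamp_mono _ _).measurable (le_clamp _ _)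
        (clamp_le (by linarith)) x).trans (by linarith)
    · exact (variance_trunc_le H hW (clamp_mono _ _).measurable (abs_clamp_le hB.le) hcl).trans hv
    · have : (0 : ℝ) ≤ (∑ i, l i : ℕ) := Nat.cast_nonneg _
      nlinarith
    · have := Finset.mem_range.1 (hlm.2 i)
      omega
  have hinner : ∀ l ∈ (Fintype.piFinset (fun i => range (q i - s + 1))).erase 0,
      μ (⋃ a ∈ Fintype.piFinset (fun i => range (2 ^ (s + l i + 1))),
        {ω | chainLevel κ v d s Q (∑ i, l i) ≤ |∑ k ∈ chainRect q s l a, lowY μ X Q k ω|}) ≤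
      ENNReal.ofReal ((2 * 2 ^ (d * (s + 1))) * Real.exp (-(κ * lam Q))) := by
    intro l hlm
    refine (measure_biUnion_finset_le _ _).trans ((Finset.sum_le_card_nsmul _ _ _
      (hrect l hlm)).trans ?_)
    rw [nsmul_eq_mul, ← ENNReal.ofReal_natCast, ← ENNReal.ofReal_mul (by positivity)]
    refine ENNReal.ofReal_le_ofReal ?_
    rw [Fintype.card_piFinset]
    simp only [Finset.card_range]
    rw [Finset.prod_pow_eq_pow_sum]
    have e1 : ∑ i : Fin d, (s + l i + 1) = d * (s + 1) + ∑ i, l i := by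
      have : ∀ i, s + l i + 1 = (s + 1) + l i := fun i => by omega
      simp only [this]
      rw [Finset.sum_add_distrib]
      simp
    rw [e1]
    push_cast
    rw [pow_add, neg_add, Real.exp_add]
    -- each extra level doubles the number of rectangles, and `2 ≤ e`
    have e2 : (2 : ℝ) ^ (∑ i, l i) * Real.exp (-(∑ i, (l i : ℝ))) ≤ 1 := by
      rw [Real.exp_neg, ← div_eq_mul_inv, div_le_one (Real.exp_pos _)]
      have : (∑ i, (l i : ℝ)) = ((∑ i, l i : ℕ) : ℝ) * 1 := by push_cast; ring
      rw [this, Real.exp_nat_mul]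
      refine pow_le_pow_left₀ (by norm_num) ?_ _
      have := Real.add_one_le_exp (1 : ℝ)
      linarith
    have e3 : 0 ≤ (2 * 2 ^ (d * (s + 1))) * Real.exp (-(κ * lam Q)) := by positivity
    calc (2 : ℝ) ^ (d * (s + 1)) * 2 ^ (∑ i, l i) * (2 * (Real.exp (-(κ * lam Q)) *
          Real.exp (-(∑ i, (l i : ℝ)))))
        = ((2 * 2 ^ (d * (s + 1))) * Real.exp (-(κ * lam Q))) *
          ((2 : ℝ) ^ (∑ i, l i) * Real.exp (-(∑ i, (l i : ℝ)))) := by ring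
      _ ≤ _ := mul_le_of_le_one_right e3 e2
  refine (measure_biUnion_finset_le _ _).trans ((Finset.sum_le_card_nsmul _ _ _ hinner).trans ?_)
  rw [nsmul_eq_mul, ← ENNReal.ofReal_natCast, ← ENNReal.ofReal_mul (by positivity)]
  refine ENNReal.ofReal_le_ofReal ?_
  have hcard : ((((Fintype.piFinset (fun i => range (q i - s + 1))).erase 0).card : ℕ) : ℝ) ≤
      ((Q : ℝ) + 1) ^ d := by
    have h1 : ((Fintype.piFinset (fun i => range (q i - s + 1))).erase 0).card ≤
        (Q + 1) ^ d := by
      refine (Finset.card_erase_le).trans ?_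
      rw [Fintype.card_piFinset]
      simp only [Finset.card_range]
      refine (Finset.prod_le_pow_card _ _ (Q + 1) fun i _ => ?_).trans (by simp)
      have := Finset.single_le_sum (f := q) (fun _ _ => Nat.zero_le _) (Finset.mem_univ i)
      omega
    exact_mod_cast h1
  calc _ ≤ ((Q : ℝ) + 1) ^ d * ((2 * 2 ^ (d * (s + 1))) * Real.exp (-(κ * lam Q))) :=
        mul_le_mul_of_nonneg_right hcard (by positivity)
    _ = _ := by ring

/-- Within a block, replacing `n` by its rounding to `s` significant binary digits changes the
sum of the lowest layer by a negligible amount, for `s` large. -/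
lemma chain_as (hd : d ≠ 0) (H : NAField μ X)
    (hW : Integrable (fun ω => (X 1 ω) ^ 2 * √(plog |X 1 ω|)) μ) {ε : ℝ} (hε : 0 < ε) :
    ∃ s : ℕ, ∀ᵐ ω ∂μ, ∀ᶠ q : Fin d → ℕ in atTop, ∀ n, InBlock q n →
      |∑ k ∈ Icc 1 n, lowY μ X (∑ i, q i) k ω -
        ∑ k ∈ chainRect q s 0 (chainIdx q s 0 n), lowY μ X (∑ i, q i) k ω| ≤
      ε * (√(2 ^ (∑ i, q i)) * √(lam (∑ i, q i))) := by
  obtain ⟨G, hG, hGs⟩ := chain_series d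
  set v : ℝ := ∫ ω, (X 1 ω) ^ 2 ∂μ with hv
  have hv0 : 0 ≤ v := integral_nonneg fun _ => sq_nonneg _
  -- a block has at most `(Q + 1)^d` levels `l`, so `κ - d > d` is needed for Borel–Cantelli
  set κ : ℝ := 2 * d + 1 with hκ
  have hκ1 : 1 ≤ κ := by have : (0 : ℝ) ≤ d := Nat.cast_nonneg d; linarith
  -- `s` is chosen so that the Gaussian part of the chaining sum is at most half of the bound
  obtain ⟨s, hs⟩ : ∃ s : ℕ, 2 * √(κ * v * 2 ^ d / 2 ^ s) * G ≤ ε / 2 := by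
    have h1 : Tendsto (fun s : ℕ => 2 * √(κ * v * 2 ^ d / 2 ^ s) * G) atTop (nhds 0) := by
      have h2 : Tendsto (fun s : ℕ => κ * v * 2 ^ d / (2 : ℝ) ^ s) atTop (nhds 0) :=
        tendsto_const_nhds.div_atTop (tendsto_pow_atTop_atTop_of_one_lt (by norm_num))
      have := ((h2.sqrt).const_mul 2).mul_const G
      simpa using this
    exact (h1.eventually (eventually_le_nhds (by positivity : (0:ℝ) < ε / 2))).exists
  refine ⟨s, ?_⟩
  have hBC := borel_cantelli_rpow (μ := μ) hd (r := κ - d)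
    (C := (2 * 2 ^ (d * (s + 1))) * 2 ^ d * (Real.log 2) ^ (-κ))
    (E := fun q : Fin d → ℕ => ⋃ l ∈ (Fintype.piFinset (fun i => range (q i - s + 1))).erase 0,
      ⋃ a ∈ Fintype.piFinset (fun i => range (2 ^ (s + l i + 1))),
        {ω | chainLevel κ v d s (∑ i, q i) (∑ i, l i) ≤
          |∑ k ∈ chainRect q s l a, lowY μ X (∑ i, q i) k ω|}) (by rw [hκ]; linarith) ?_
  · -- the bounded-jump part of the chaining sum
    have hjump : ∀ᶠ Q : ℕ in atTop, ((Q : ℝ) + 1) ^ d * (2 * (κ + d) * (Q * lowT d Q)) ≤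
        ε / 2 * √(2 ^ Q) := by
      have h1 : Tendsto (fun Q : ℕ => (2 ^ d * (2 * (κ + d))) / (Q : ℝ)) atTop (nhds 0) :=
        tendsto_const_nhds.div_atTop tendsto_natCast_atTop_atTop
      filter_upwards [h1.eventually (eventually_le_nhds (by positivity : (0:ℝ) < ε / 2)),
        eventually_ge_atTop 1] with Q h2 h3
      have hQ' : (1 : ℝ) ≤ Q := by exact_mod_cast h3
      have h4 : ((Q : ℝ) + 1) ^ d ≤ 2 ^ d * (Q : ℝ) ^ d := by
        rw [← mul_pow]; exact pow_le_pow_left₀ (by positivity) (by linarith) _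
      have h5 : (Q : ℝ) ^ d * (Q * lowT d Q) = √(2 ^ Q) / Q := by
        unfold lowT
        rw [pow_add]
        field_simp
      calc ((Q : ℝ) + 1) ^ d * (2 * (κ + d) * (Q * lowT d Q))
          ≤ (2 ^ d * (Q : ℝ) ^ d) * (2 * (κ + d) * (Q * lowT d Q)) := by
            refine mul_le_mul_of_nonneg_right h4 ?_
            have := lowT_pos (d := d) h3
            positivity
        _ = (2 ^ d * (2 * (κ + d))) * ((Q : ℝ) ^ d * (Q * lowT d Q)) := by ring
        _ = (2 ^ d * (2 * (κ + d))) / (Q : ℝ) * √(2 ^ Q) := by rw [h5]; ring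
        _ ≤ _ := mul_le_mul_of_nonneg_right h2 (Real.sqrt_nonneg _)
    filter_upwards [hBC] with ω hω
    filter_upwards [hω, (tendsto_tot hd).eventually hjump,
      (tendsto_tot hd).eventually (eventually_ge_atTop 1), eventually_ge_atTop fun _ => s]
      with q hq hj hQ hsq n hn
    simp only [Set.mem_iUnion, not_exists, Set.mem_ofPred_eq, not_le] at hq
    set Q := ∑ i, q i with hQdef
    have h0mem : (0 : Fin d → ℕ) ∈ Fintype.piFinset (fun i => range (q i - s + 1)) := by
      simp [Fintype.mem_piFinset]
    rw [sum_chain q s n, ← Finset.add_sum_erase _ _ h0mem, add_sub_cancel_left]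
    refine (Finset.abs_sum_le_sum_abs _ _).trans ?_
    have hterm : ∀ l ∈ (Fintype.piFinset (fun i => range (q i - s + 1))).erase 0,
        |∑ k ∈ chainRect q s l (chainIdx q s l n), lowY μ X Q k ω| ≤
        2 * √(κ * v * 2 ^ d / 2 ^ s) * (√(2 ^ Q) * √(lam Q)) *
          ((1 + ((∑ i, l i : ℕ) : ℝ)) * (√2)⁻¹ ^ (∑ i, l i)) +
        2 * (κ + d) * (Q * lowT d Q) := by
      intro l hl
      have hl' : ∀ i, l i ≤ q i - s := fun i => by
        have := Fintype.mem_piFinset.1 (Finset.mem_erase.1 hl).2 i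
        rw [Finset.mem_range] at this
        omega
      have hidx : chainIdx q s l n ∈ Fintype.piFinset (fun i => range (2 ^ (s + l i + 1))) := by
        rw [Fintype.mem_piFinset]
        intro i
        rw [Finset.mem_range, chainIdx, Nat.div_lt_iff_lt_mul (by positivity), ← pow_add]
        refine (hn i).2.trans_le (Nat.pow_le_pow_right (by norm_num) ?_)
        have := hl' i
        have := hsq i
        simp only at this
        omega
      refine (hq l hl _ hidx).le.trans (chainLevel_le hκ1 hv0 hQ ?_)
      calc ∑ i, l i ≤ ∑ i : Fin d, Q := Finset.sum_le_sum fun i _ => by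
            have := Finset.single_le_sum (f := q) (fun _ _ => Nat.zero_le _) (Finset.mem_univ i)
            have := hl' i
            omega
        _ = d * Q := by simp
    refine (Finset.sum_le_sum hterm).trans ?_
    refine (Finset.sum_le_sum_of_subset_of_nonneg (Finset.erase_subset _ _) fun l _ _ => ?_).trans
      ?_
    · have := lowT_pos (d := d) hQ
      positivity
    rw [Finset.sum_add_distrib, ← Finset.mul_sum, Finset.sum_const, nsmul_eq_mul]
    have hcard : (((Fintype.piFinset (fun i => range (q i - s + 1))).card : ℕ) : ℝ) ≤
        ((Q : ℝ) + 1) ^ d := by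
      have h1 : (Fintype.piFinset (fun i => range (q i - s + 1))).card ≤ (Q + 1) ^ d := by
        rw [Fintype.card_piFinset]
        simp only [Finset.card_range]
        refine (Finset.prod_le_pow_card _ _ (Q + 1) fun i _ => ?_).trans (by simp)
        have := Finset.single_le_sum (f := q) (fun _ _ => Nat.zero_le _) (Finset.mem_univ i)
        omega
      exact_mod_cast h1
    have hlQ : 1 ≤ √(lam Q) := Real.one_le_sqrt.2 (one_le_lam Q)
    have hsQ : 0 ≤ √((2 : ℝ) ^ Q) := Real.sqrt_nonneg _
    have b1 : 2 * √(κ * v * 2 ^ d / 2 ^ s) * (√(2 ^ Q) * √(lam Q)) *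
        ∑ l ∈ Fintype.piFinset (fun i => range (q i - s + 1)),
          (1 + ((∑ i, l i : ℕ) : ℝ)) * (√2)⁻¹ ^ (∑ i, l i) ≤
        ε / 2 * (√(2 ^ Q) * √(lam Q)) := by
      refine (mul_le_mul_of_nonneg_left (hGs _) (by positivity)).trans ?_
      calc _ = (2 * √(κ * v * 2 ^ d / 2 ^ s) * G) * (√(2 ^ Q) * √(lam Q)) := by ring
        _ ≤ _ := mul_le_mul_of_nonneg_right hs (by positivity)
    have b2 : ((Fintype.piFinset (fun i => range (q i - s + 1))).card : ℝ) *
        (2 * (κ + d) * (Q * lowT d Q)) ≤ ε / 2 * (√(2 ^ Q) * √(lam Q)) := by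
      have := lowT_pos (d := d) hQ
      refine (mul_le_mul_of_nonneg_right hcard (by positivity)).trans (hj.trans ?_)
      refine mul_le_mul_of_nonneg_left ?_ (by positivity)
      exact le_mul_of_one_le_right hsQ hlQ
    linarith
  · filter_upwards [(tendsto_tot hd).eventually (exp_lam (c := κ)),
      (tendsto_tot hd).eventually (eventually_ge_atTop 1), eventually_ge_atTop fun _ => s]
      with q hq hQ hsq
    refine (chain_prob H hW hκ1 le_rfl hsq hQ).trans (ENNReal.ofReal_le_ofReal ?_)
    set Q := ∑ i, q i with hQdef
    have hQ' : (1 : ℝ) ≤ Q := by exact_mod_cast hQ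
    rw [hq]
    have h4 : ((Q : ℝ) + 1) ^ d ≤ 2 ^ d * (Q : ℝ) ^ d := by
      rw [← mul_pow]; exact pow_le_pow_left₀ (by positivity) (by linarith) _
    have h5 : (Q : ℝ) ^ (-(κ - d)) = (Q : ℝ) ^ d * (Q : ℝ) ^ (-κ) := by
      rw [← Real.rpow_natCast, ← Real.rpow_add (by linarith)]; congr 1; ring
    have hl2 : 0 < Real.log 2 := Real.log_pos (by norm_num)
    rw [h5]
    calc _ ≤ 2 * 2 ^ (d * (s + 1)) * (2 ^ d * (Q : ℝ) ^ d) *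
          (Real.log 2 ^ (-κ) * (Q : ℝ) ^ (-κ)) := by gcongr
      _ = _ := by ring

end

/-! ### The sharp bound on the lowest layer -/

section

variable {Ω : Type} [MeasurableSpace Ω] {μ : Measure Ω} [IsProbabilityMeasure μ] {d : ℕ}
  {X : (Fin d → ℕ) → Ω → ℝ}

/-- The sharp exponential bound. The Chernoff parameter is `t = x / (N w)`, where `x` is the level,
`w` slightly exceeds the variance, and `δ` bounds `t` times the bound on the summands. -/
lemma sharp_prob (H : NAField μ X)
    (hW : Integrable (fun ω => (X 1 ω) ^ 2 * √(plog |X 1 ω|)) μ) {σ τ w δ : ℝ}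
    (hσ : ∫ ω, (X 1 ω) ^ 2 ∂μ = σ ^ 2) (hτ : 0 < τ) (hw : 0 < w) (hδ : δ ≤ 1)
    (hδw : σ ^ 2 * (1 + δ) ≤ w) {Q : ℕ} (hQ : 1 ≤ Q)
    (hQδ : 2 * τ * √(2 * d) / w / Q ≤ δ) {A : Finset (Fin d → ℕ)} (hA : ∀ k ∈ A, 1 ≤ k)
    {N : ℝ} (hN : (A.card : ℝ) ≤ N) (hN2 : 2 ^ Q ≤ N) :
    μ {ω | τ * (√(2 * d * lam Q) * √N) ≤ |∑ k ∈ A, lowY μ X Q k ω|} ≤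
      ENNReal.ofReal (2 * Real.exp (-(d * τ ^ 2 / w * lam Q))) := by
  have hB := lowT_pos (d := d) hQ
  have hQ' : (1 : ℝ) ≤ Q := by exact_mod_cast hQ
  have hl := one_le_lam Q
  have hN0 : 0 < N := lt_of_lt_of_le (by positivity) hN2
  set y := √(2 * d * lam Q) with hy
  set z := √N with hz
  have hy2 : y ^ 2 = 2 * d * lam Q := Real.sq_sqrt (by positivity)
  have hz2 : z ^ 2 = N := Real.sq_sqrt hN0.le
  have hz0 : 0 < z := Real.sqrt_pos.2 hN0
  have hy0 : 0 ≤ y := Real.sqrt_nonneg _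
  set t := τ * y / (z * w) with ht
  have ht0 : 0 ≤ t := by positivity
  have hcl : ∀ x, |clamp (-lowT d Q) (lowT d Q) x| ≤ lowT d Q := fun x =>
    abs_le.2 ⟨le_clamp _ _ _, clamp_le (by linarith) _⟩
  have htM : t * (2 * lowT d Q) ≤ δ := by
    refine le_trans ?_ hQδ
    have h1 : y ≤ √(2 * d) * Q := by
      rw [hy, Real.sqrt_mul (by positivity)]
      refine mul_le_mul_of_nonneg_left ?_ (Real.sqrt_nonneg _)
      exact Real.sqrt_le_iff.2 ⟨by positivity, (lam_le hQ).trans (by nlinarith)⟩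
    have h2 : lowT d Q * Q ≤ z / Q := by
      have h3 : √(2 ^ Q) ≤ z := Real.sqrt_le_sqrt hN2
      unfold lowT
      rw [div_mul_eq_mul_div, div_le_div_iff₀ (by positivity) (by positivity)]
      have h4 : (Q : ℝ) ^ 2 ≤ Q ^ (d + 2) := pow_le_pow_right₀ hQ' (by omega)
      calc √(2 ^ Q) * Q * Q = √(2 ^ Q) * Q ^ 2 := by ring
        _ ≤ z * Q ^ (d + 2) := by gcongr
    calc t * (2 * lowT d Q) = 2 * τ / (z * w) * (y * lowT d Q) := by rw [ht]; ring
      _ ≤ 2 * τ / (z * w) * (√(2 * d) * Q * lowT d Q) := by gcongr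
      _ = 2 * τ / (z * w) * √(2 * d) * (lowT d Q * Q) := by ring
      _ ≤ 2 * τ / (z * w) * √(2 * d) * (z / Q) := by gcongr
      _ = _ := by field_simp
  have hb := H.bernstein (clamp_mono (-lowT d Q) (lowT d Q)) rfl (M := 2 * lowT d Q)
    (v := σ ^ 2) (fun x => ?_) ?_ ht0 (htM.trans hδ) hA hN (x := τ * (y * z))
  · refine hb.trans (ENNReal.ofReal_le_ofReal ?_)
    refine mul_le_mul_of_nonneg_left (Real.exp_le_exp.2 ?_) zero_le_two
    have e1 : t * (τ * (y * z)) = 2 * (d * τ ^ 2 / w * lam Q) := by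
      rw [ht]
      calc τ * y / (z * w) * (τ * (y * z)) = τ ^ 2 * y ^ 2 / w := by field_simp
        _ = _ := by rw [hy2]; ring
    have e2 : N * σ ^ 2 * t ^ 2 * ((1 + t * (2 * lowT d Q)) / 2) ≤
        d * τ ^ 2 / w * lam Q := by
      have e3 : σ ^ 2 * (1 + t * (2 * lowT d Q)) ≤ w :=
        (mul_le_mul_of_nonneg_left (by linarith) (sq_nonneg σ)).trans hδw
      calc N * σ ^ 2 * t ^ 2 * ((1 + t * (2 * lowT d Q)) / 2)
          = N * t ^ 2 / 2 * (σ ^ 2 * (1 + t * (2 * lowT d Q))) := by ring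
        _ ≤ N * t ^ 2 / 2 * w := by gcongr
        _ = τ ^ 2 * y ^ 2 / (2 * w) := by rw [ht, ← hz2]; field_simp
        _ = _ := by rw [hy2]; field_simp
    rw [e1]
    linarith
  · refine (abs_sub_mean_le H (clamp_mono _ _).measurable (le_clamp _ _)
      (clamp_le (by linarith)) x).trans (by linarith)
  · exact (variance_trunc_le H hW (clamp_mono _ _).measurable (abs_clamp_le hB.le) hcl).trans hσ.le

/-- The bound with the sharp constant for the sums over rounded boxes. -/
lemma sharp_as (hd : d ≠ 0) (H : NAField μ X)
    (hW : Integrable (fun ω => (X 1 ω) ^ 2 * √(plog |X 1 ω|)) μ) {ε : ℝ} (hε : 0 < ε) (s : ℕ) :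
    ∀ᵐ ω ∂μ, ∀ᶠ q : Fin d → ℕ in atTop, ∀ n, InBlock q n →
      |∑ k ∈ chainRect q s 0 (chainIdx q s 0 n), lowY μ X (∑ i, q i) k ω| ≤
      (√(∫ ω, (X 1 ω) ^ 2 ∂μ) + ε) * (√(2 * d * lam (∑ i, q i)) * √(∏ i, (n i : ℝ))) := by
  set σ := √(∫ ω, (X 1 ω) ^ 2 ∂μ) with hσ
  have hσ0 : 0 ≤ σ := Real.sqrt_nonneg _
  have hσ2 : ∫ ω, (X 1 ω) ^ 2 ∂μ = σ ^ 2 :=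
    (Real.sq_sqrt (integral_nonneg fun _ => sq_nonneg _)).symm
  have hd1 : (1 : ℝ) ≤ d := by exact_mod_cast Nat.one_le_iff_ne_zero.2 hd
  set w := σ ^ 2 + ε ^ 2 / 2 with hw
  have hw0 : 0 < w := by positivity
  set δ := min 1 (ε ^ 2 / 2 / (σ ^ 2 + 1)) with hδ
  have hδ0 : 0 < δ := lt_min one_pos (by positivity)
  have hδw : σ ^ 2 * (1 + δ) ≤ w := by
    have h1 : σ ^ 2 * δ ≤ ε ^ 2 / 2 := by
      calc σ ^ 2 * δ ≤ (σ ^ 2 + 1) * (ε ^ 2 / 2 / (σ ^ 2 + 1)) :=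
            mul_le_mul (by linarith) (min_le_right _ _) hδ0.le (by positivity)
        _ = _ := by field_simp
    rw [hw]; linarith
  have hr : (d : ℝ) < d * (σ + ε) ^ 2 / w := by
    rw [lt_div_iff₀ hw0]
    refine mul_lt_mul_of_pos_left ?_ (by linarith)
    rw [hw]; nlinarith [mul_nonneg hσ0 hε.le, pow_pos hε 2]
  have hQδ : ∀ᶠ Q : ℕ in atTop, 2 * (σ + ε) * √(2 * d) / w / (Q : ℝ) ≤ δ :=
    (tendsto_const_nhds.div_atTop tendsto_natCast_atTop_atTop).eventually (eventually_le_nhds hδ0)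
  have hcardA : ∀ q a : Fin d → ℕ, (((chainRect q s 0 a).card : ℕ) : ℝ) =
      ∏ i, ((a i : ℝ) * 2 ^ (q i - s)) := by
    intro q a
    rw [chainRect, Fintype.card_piFinset]
    push_cast
    refine Finset.prod_congr rfl fun i _ => ?_
    simp [chainI]
  have hBC := borel_cantelli_rpow (μ := μ) hd hr
    (C := (2 ^ s) ^ d * (2 * (Real.log 2) ^ (-(d * (σ + ε) ^ 2 / w))))
    (E := fun q : Fin d → ℕ => ⋃ a ∈ Fintype.piFinset (fun _ => Ico (2 ^ s) (2 ^ (s + 1))),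
        {ω | (σ + ε) * (√(2 * d * lam (∑ i, q i)) * √((chainRect q s 0 a).card)) ≤
          |∑ k ∈ chainRect q s 0 a, lowY μ X (∑ i, q i) k ω|}) ?_
  · filter_upwards [hBC] with ω hω
    filter_upwards [hω, eventually_ge_atTop fun _ => s] with q hq hsq n hn
    simp only [Set.mem_iUnion, not_exists, Set.mem_ofPred_eq, not_le] at hq
    have hidx : chainIdx q s 0 n ∈ Fintype.piFinset
        (fun _ : Fin d => Ico (2 ^ s) (2 ^ (s + 1))) := by
      rw [Fintype.mem_piFinset]
      intro i
      have h1 : s ≤ q i := hsq i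
      rw [Finset.mem_Ico, chainIdx, Nat.div_lt_iff_lt_mul (by positivity),
        Nat.le_div_iff_mul_le (by positivity), ← pow_add, ← pow_add]
      simp only [Pi.zero_apply, Nat.sub_zero]
      rw [show s + (q i - s) = q i by omega, show s + 1 + (q i - s) = q i + 1 by omega]
      exact hn i
    refine (hq _ hidx).le.trans ?_
    refine mul_le_mul_of_nonneg_left ?_ (by positivity)
    refine mul_le_mul_of_nonneg_left (Real.sqrt_le_sqrt ?_) (Real.sqrt_nonneg _)
    rw [hcardA]
    refine Finset.prod_le_prod (fun i _ => by positivity) fun i _ => ?_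
    have := Nat.div_mul_le_self (n i) (2 ^ (q i - s))
    simp only [chainIdx, Pi.zero_apply, Nat.sub_zero]
    exact_mod_cast this
  · filter_upwards [(tendsto_tot hd).eventually (exp_lam (c := d * (σ + ε) ^ 2 / w)),
      (tendsto_tot hd).eventually (eventually_ge_atTop 1), (tendsto_tot hd).eventually hQδ,
      eventually_ge_atTop fun _ => s] with q hq hQ hQd hsq
    have hone : ∀ a ∈ Fintype.piFinset (fun _ : Fin d => Ico (2 ^ s) (2 ^ (s + 1))),
        μ {ω | (σ + ε) * (√(2 * d * lam (∑ i, q i)) * √((chainRect q s 0 a).card)) ≤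
          |∑ k ∈ chainRect q s 0 a, lowY μ X (∑ i, q i) k ω|} ≤
        ENNReal.ofReal (2 * Real.exp (-(d * (σ + ε) ^ 2 / w * lam (∑ i, q i)))) := by
      intro a ha
      refine sharp_prob H hW hσ2 (by positivity) hw0 (min_le_left _ _) hδw hQ hQd
        (fun k hk => chainRect_pos hk) le_rfl ?_
      rw [hcardA, ← Finset.prod_pow_eq_pow_sum]
      refine Finset.prod_le_prod (fun i _ => by positivity) fun i _ => ?_
      have h1 := (Finset.mem_Ico.1 (Fintype.mem_piFinset.1 ha i)).1
      have h2 : s ≤ q i := hsq i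
      calc (2 : ℝ) ^ q i = 2 ^ s * 2 ^ (q i - s) := by rw [← pow_add]; congr 1; omega
        _ ≤ _ := by
          refine mul_le_mul_of_nonneg_right ?_ (by positivity)
          exact_mod_cast h1
    refine (measure_biUnion_finset_le _ _).trans ((Finset.sum_le_card_nsmul _ _ _ hone).trans ?_)
    rw [nsmul_eq_mul, ← ENNReal.ofReal_natCast, ← ENNReal.ofReal_mul (Nat.cast_nonneg _)]
    refine ENNReal.ofReal_le_ofReal (le_of_eq ?_)
    rw [hq, Fintype.card_piFinset]
    simp only [Nat.card_Ico, Finset.prod_const, Finset.card_univ, Fintype.card_fin]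
    rw [show 2 ^ (s + 1) - 2 ^ s = 2 ^ s by rw [pow_succ]; omega]
    push_cast
    rw [mul_assoc ((2 ^ s) ^ d : ℝ), mul_assoc (2 : ℝ)]

end

/-! ### The middle layers -/

section

/-- The point of the grid with mesh `2^(q i - L)` in direction `i` that has index `a`, cut off at
the upper corner of the block `q`. -/
def gridPt {d : ℕ} (q : Fin d → ℕ) (L : ℕ) (a : Fin d → ℕ) : Fin d → ℕ :=
  fun i => min (a i * 2 ^ (q i - L)) (2 ^ (q i + 1))

/-- Both neighbours of `n` in the one-dimensional grid are within relative distance `2^(-L)`. The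
grid is exact when `q ≤ L`. -/
lemma exists_round {q n : ℕ} (L : ℕ) (h1 : 2 ^ q ≤ n) (h2 : n < 2 ^ (q + 1)) :
    ∃ a a' : ℕ, a < 2 ^ (L + 1) + 1 ∧ a' < 2 ^ (L + 1) + 1 ∧
      min (a * 2 ^ (q - L)) (2 ^ (q + 1)) ≤ n ∧ n ≤ min (a' * 2 ^ (q - L)) (2 ^ (q + 1)) ∧
      (n : ℝ) * (1 - (2 ^ L)⁻¹) ≤ (min (a * 2 ^ (q - L)) (2 ^ (q + 1)) : ℕ) ∧
      ((min (a' * 2 ^ (q - L)) (2 ^ (q + 1)) : ℕ) : ℝ) ≤ n * (1 + (2 ^ L)⁻¹) := by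
  have hθ : (0 : ℝ) < (2 ^ L)⁻¹ := by positivity
  have hn0 : (0 : ℝ) ≤ n := Nat.cast_nonneg n
  rcases Nat.le_total q L with h | h
  · have h3 : 2 ^ (q + 1) ≤ 2 ^ (L + 1) := Nat.pow_le_pow_right (by norm_num) (by omega)
    rw [Nat.sub_eq_zero_of_le h]
    refine ⟨n, n, by omega, by omega, ?_⟩
    rw [pow_zero, mul_one, Nat.min_eq_left h2.le]
    refine ⟨le_rfl, le_rfl, ?_, ?_⟩ <;> nlinarith [mul_nonneg hn0 hθ.le]
  · obtain ⟨r, rfl⟩ := Nat.exists_eq_add_of_le h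
    rw [Nat.add_sub_cancel_left]
    have hlt : n / 2 ^ r < 2 ^ (L + 1) := by
      rw [Nat.div_lt_iff_lt_mul (by positivity), ← pow_add]
      rwa [show L + 1 + r = L + r + 1 by omega]
    have e1 := Nat.div_mul_le_self n (2 ^ r)
    have e2 : n < (n / 2 ^ r + 1) * 2 ^ r := by
      have := Nat.lt_succ_self (n / 2 ^ r)
      rwa [Nat.div_lt_iff_lt_mul (by positivity)] at this
    have e3 : (n / 2 ^ r + 1) * 2 ^ r ≤ 2 ^ (L + r + 1) := by
      calc (n / 2 ^ r + 1) * 2 ^ r ≤ 2 ^ (L + 1) * 2 ^ r := Nat.mul_le_mul_right _ hlt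
        _ = _ := by rw [← pow_add]; congr 1; omega
    refine ⟨n / 2 ^ r, n / 2 ^ r + 1, by omega, by omega, ?_⟩
    rw [Nat.min_eq_left (by omega), Nat.min_eq_left e3]
    have e4 : (2 : ℝ) ^ r ≤ n * (2 ^ L)⁻¹ := by
      rw [← div_eq_mul_inv, le_div_iff₀ (by positivity), mul_comm, ← pow_add]
      exact_mod_cast h1
    have e5 : ((n / 2 ^ r : ℕ) : ℝ) * 2 ^ r ≤ n := by exact_mod_cast e1
    have e6 : (n : ℝ) < (((n / 2 ^ r : ℕ) : ℝ) + 1) * 2 ^ r := by exact_mod_cast e2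
    refine ⟨e1, e2.le, ?_, ?_⟩ <;> push_cast only [Nat.cast_mul, Nat.cast_add] <;> push_cast <;>
      nlinarith

lemma one_add_pow_le {θ : ℝ} (h0 : 0 ≤ θ) (h1 : θ ≤ 1) (d : ℕ) :
    (1 + θ) ^ d ≤ 1 + (2 ^ d - 1) * θ := by
  induction d with
  | zero => simp
  | succ d ih =>
    have h2 : (1 : ℝ) ≤ 2 ^ d := one_le_pow₀ (by norm_num)
    rw [pow_succ, pow_succ]
    have h3 : (2 ^ d - 1) * θ * θ ≤ (2 ^ d - 1) * θ * 1 :=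
      mul_le_mul_of_nonneg_left h1 (mul_nonneg (by linarith) h0)
    have := mul_le_mul_of_nonneg_right ih (by linarith : 0 ≤ 1 + θ)
    nlinarith

lemma card_Icc_one {d : ℕ} (n : Fin d → ℕ) : ((Icc 1 n).card : ℝ) = ∏ i, (n i : ℝ) := by
  rw [Pi.card_Icc]
  push_cast
  refine Finset.prod_congr rfl fun i _ => ?_
  simp

/-- Monotone sandwich for centred sums of one-signed quantities. -/
lemma abs_sum_sandwich {ι : Type*} {A N C : Finset ι} (hAN : A ⊆ N) (hNC : N ⊆ C) {y : ι → ℝ}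
    {m e : ℝ} (hy : (0 ≤ m ∧ ∀ k, 0 ≤ y k) ∨ (m ≤ 0 ∧ ∀ k, y k ≤ 0))
    (hA : |∑ k ∈ A, (y k - m)| ≤ e) (hC : |∑ k ∈ C, (y k - m)| ≤ e) :
    |∑ k ∈ N, (y k - m)| ≤ e + |m| * ((C.card : ℝ) - A.card) := by
  have hc1 : (A.card : ℝ) ≤ N.card := by exact_mod_cast Finset.card_le_card hAN
  have hc2 : (N.card : ℝ) ≤ C.card := by exact_mod_cast Finset.card_le_card hNC
  simp only [Finset.sum_sub_distrib, Finset.sum_const, nsmul_eq_mul] at *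
  rw [abs_le] at *
  rcases hy with ⟨hm, hy⟩ | ⟨hm, hy⟩
  · have h1 := Finset.sum_le_sum_of_subset_of_nonneg hAN (f := y) fun k _ _ => hy k
    have h2 := Finset.sum_le_sum_of_subset_of_nonneg hNC (f := y) fun k _ _ => hy k
    rw [abs_of_nonneg hm]
    constructor <;> nlinarith [mul_le_mul_of_nonneg_left hc1 hm, mul_le_mul_of_nonneg_left hc2 hm]
  · have h1 := Finset.sum_le_sum_of_subset_of_nonneg hAN (f := fun k => -y k)
      fun k _ _ => neg_nonneg.2 (hy k)
    have h2 := Finset.sum_le_sum_of_subset_of_nonneg hNC (f := fun k => -y k)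
      fun k _ _ => neg_nonneg.2 (hy k)
    simp only [Finset.sum_neg_distrib] at h1 h2
    rw [abs_of_nonpos hm]
    constructor <;> nlinarith [mul_le_mul_of_nonneg_left hc1 (neg_nonneg.2 hm),
      mul_le_mul_of_nonneg_left hc2 (neg_nonneg.2 hm)]

/-- The multi-dimensional rounding: `n` is squeezed between two grid points whose boxes differ by
a relative amount `O(2^(-L))` in volume. -/
lemma exists_grid {d : ℕ} {q n : Fin d → ℕ} (L : ℕ) (hn : InBlock q n) :
    ∃ a ∈ Fintype.piFinset (fun _ : Fin d => range (2 ^ (L + 1) + 1)),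
    ∃ a' ∈ Fintype.piFinset (fun _ : Fin d => range (2 ^ (L + 1) + 1)),
      gridPt q L a ≤ n ∧ n ≤ gridPt q L a' ∧
      ((Icc 1 (gridPt q L a')).card : ℝ) - (Icc 1 (gridPt q L a)).card ≤
        2 ^ (d + 1) * (2 ^ L)⁻¹ * ∏ i, (n i : ℝ) := by
  choose a a' h1 h2 h3 h4 h5 h6 using fun i => exists_round L (hn i).1 (hn i).2
  refine ⟨a, by simpa [Fintype.mem_piFinset] using fun i => Nat.lt_succ_iff.1 (h1 i), a',
    by simpa [Fintype.mem_piFinset] using fun i => Nat.lt_succ_iff.1 (h2 i), h3, h4, ?_⟩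
  rw [card_Icc_one, card_Icc_one]
  set θ : ℝ := (2 ^ L)⁻¹ with hθ
  have hθ0 : 0 ≤ θ := by positivity
  have hθ1 : θ ≤ 1 := inv_le_one_of_one_le₀ (one_le_pow₀ (by norm_num))
  have hP : (0 : ℝ) ≤ ∏ i, (n i : ℝ) := Finset.prod_nonneg fun i _ => Nat.cast_nonneg _
  have b1 : ∏ i, (gridPt q L a' i : ℝ) ≤ (∏ i, (n i : ℝ)) * (1 + θ) ^ d := by
    calc ∏ i, (gridPt q L a' i : ℝ) ≤ ∏ i, ((n i : ℝ) * (1 + θ)) :=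
          Finset.prod_le_prod (fun i _ => Nat.cast_nonneg _) fun i _ => h6 i
      _ = _ := by rw [Finset.prod_mul_distrib]; simp
  have b2 : (∏ i, (n i : ℝ)) * (1 - θ) ^ d ≤ ∏ i, (gridPt q L a i : ℝ) := by
    calc (∏ i, (n i : ℝ)) * (1 - θ) ^ d = ∏ i, ((n i : ℝ) * (1 - θ)) := by
          rw [Finset.prod_mul_distrib]; simp
      _ ≤ _ := Finset.prod_le_prod (fun i _ => mul_nonneg (Nat.cast_nonneg _) (by linarith))
          fun i _ => h5 i
  have b3 := one_add_pow_le hθ0 hθ1 d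
  have b4 : 1 - d * θ ≤ (1 - θ) ^ d := by
    have := one_add_mul_le_pow (a := -θ) (by linarith) d
    have e : (1 + -θ) = 1 - θ := by ring
    rw [e] at this
    linarith
  have b5 : (d : ℝ) ≤ 2 ^ d := by exact_mod_cast Nat.lt_two_pow_self.le
  have b6 : (1 + θ) ^ d - (1 - θ) ^ d ≤ 2 ^ (d + 1) * θ := by
    rw [pow_succ]; nlinarith
  nlinarith [mul_le_mul_of_nonneg_left b6 hP]

variable {Ω : Type} [MeasurableSpace Ω] {μ : Measure Ω} [IsProbabilityMeasure μ] {d : ℕ}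
  {X : (Fin d → ℕ) → Ω → ℝ}

lemma highT_pos {Q : ℕ} (hQ : 1 ≤ Q) : 0 < highT Q := by
  have : (0 : ℝ) < Q := by exact_mod_cast hQ
  unfold highT; positivity

/-- Exceedance level for the middle layers at the grid points: the level of `NAField.bernstein_inv`
for `u = κ log Q`. -/
def midLevel (κ W : ℝ) (d Q : ℕ) : ℝ :=
  2 * √(κ * Real.log Q * (4 * W / √Q) * 2 ^ (Q + d)) + κ * Real.log Q * highT Q

lemma midLevel_le (κ W : ℝ) (d : ℕ) {ε : ℝ} (hε : 0 < ε) :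
    ∀ᶠ Q : ℕ in atTop, midLevel κ W d Q ≤ ε * √(2 ^ Q) := by
  have hlog : ∀ {p : ℝ}, 0 < p → Tendsto (fun Q : ℕ => Real.log Q / (Q : ℝ) ^ p) atTop (nhds 0) :=
    fun hp => ((isLittleO_log_rpow_atTop hp).tendsto_div_nhds_zero).comp tendsto_natCast_atTop_atTop
  have h1 : Tendsto (fun Q : ℕ => 2 * √(κ * 4 * W * 2 ^ d * (Real.log Q / (Q : ℝ) ^ (1 / 2 : ℝ))) +
      κ * (Real.log Q / (Q : ℝ) ^ (1 / 8 : ℝ))) atTop (nhds 0) := by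
    have := (((hlog (p := 1 / 2) (by norm_num)).const_mul (κ * 4 * W * 2 ^ d)).sqrt.const_mul 2).add
      ((hlog (p := 1 / 8) (by norm_num)).const_mul κ)
    simpa using this
  filter_upwards [h1.eventually (eventually_le_nhds hε)] with Q hQ
  refine le_trans (le_of_eq ?_) (mul_le_mul_of_nonneg_right hQ (Real.sqrt_nonneg _))
  unfold midLevel highT
  have e1 : κ * Real.log Q * (4 * W / √Q) * 2 ^ (Q + d) =
      (κ * 4 * W * 2 ^ d * (Real.log Q / (Q : ℝ) ^ (1 / 2 : ℝ))) * 2 ^ Q := by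
    rw [← Real.sqrt_eq_rpow, pow_add]; ring
  rw [e1, Real.sqrt_mul' _ (by positivity)]
  ring

/-- One-signed monotone layers supported beyond the lower truncation level and bounded by the upper
one contribute `o(2^(Q/2))`, uniformly over a block. -/
lemma middle_as (hd : d ≠ 0) (H : NAField μ X)
    (hW : Integrable (fun ω => (X 1 ω) ^ 2 * √(plog |X 1 ω|)) μ) {ε : ℝ} (hε : 0 < ε)
    {g : ℕ → ℝ → ℝ} (hg : ∀ Q, Monotone (g Q))
    (hz : ∀ Q, 1 ≤ Q → ∀ x, |x| ≤ lowT d Q → g Q x = 0)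
    (hx : ∀ Q, 1 ≤ Q → ∀ x, |g Q x| ≤ |x|)
    (hb : ∀ Q, 1 ≤ Q → ∀ x, |g Q x| ≤ highT Q)
    (hs : (∀ Q, 1 ≤ Q → ∀ x, 0 ≤ g Q x) ∨ (∀ Q, 1 ≤ Q → ∀ x, g Q x ≤ 0)) :
    ∀ᵐ ω ∂μ, ∀ᶠ q : Fin d → ℕ in atTop, ∀ n, InBlock q n →
      |∑ k ∈ Icc 1 n, (g (∑ i, q i) (X k ω) - ∫ ω', g (∑ i, q i) (X 1 ω') ∂μ)| ≤
      ε * √(2 ^ (∑ i, q i)) := by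
  -- the grid has `O(Q^(d (d + 3)))` points, and a block may fail with probability `O(Q^(-(d + 1)))`
  set κ : ℝ := d * (d + 3) + (d + 1) with hκ
  set W := wMom μ X with hWdef
  have hW0 : 0 ≤ W := wMom_nonneg
  set L : ℕ → ℕ := fun Q => Nat.clog 2 (Q ^ (d + 3)) with hL
  have hL1 : ∀ Q : ℕ, Q ^ (d + 3) ≤ 2 ^ L Q := fun Q => Nat.le_pow_clog (by norm_num) _
  have hL2 : ∀ Q : ℕ, 2 ≤ Q → 2 ^ L Q ≤ 2 * Q ^ (d + 3) := by
    intro Q hQ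
    have h1 : 1 < Q ^ (d + 3) := Nat.one_lt_pow (by omega) (by omega)
    have h2 := Nat.pow_pred_clog_lt_self (b := 2) (by norm_num) h1
    have h3 : 0 < L Q := Nat.clog_pos (by norm_num) h1
    obtain ⟨l, hl⟩ : ∃ l, L Q = l + 1 := ⟨L Q - 1, by omega⟩
    have h4 : (Nat.clog 2 (Q ^ (d + 3))).pred = l := by
      change (L Q).pred = l
      rw [hl]; rfl
    rw [h4] at h2
    rw [hl, pow_succ]; omega
  have hBC := borel_cantelli_rpow (μ := μ) hd (r := d + 1) (C := 5 ^ d * 2)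
    (E := fun q : Fin d → ℕ =>
      ⋃ a ∈ Fintype.piFinset (fun _ : Fin d => range (2 ^ (L (∑ i, q i) + 1) + 1)),
        {ω | midLevel κ W d (∑ i, q i) ≤
          |∑ k ∈ Icc 1 (gridPt q (L (∑ i, q i)) a),
            (g (∑ i, q i) (X k ω) - ∫ ω', g (∑ i, q i) (X 1 ω') ∂μ)|}) (by linarith) ?_
  · have hslab : ∀ᶠ Q : ℕ in atTop,
        4 * W * 2 ^ (2 * d + 1) / (Q : ℝ) ≤ ε / 2 :=
      (tendsto_const_nhds.div_atTop tendsto_natCast_atTop_atTop).eventually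
        (eventually_le_nhds (by positivity))
    filter_upwards [hBC] with ω hω
    filter_upwards [hω, (tendsto_tot hd).eventually (midLevel_le κ W d (half_pos hε)),
      (tendsto_tot hd).eventually (eventually_ge_atTop 1), (tendsto_tot hd).eventually hslab,
      (tendsto_tot hd).eventually (exp_le_lowT d)] with q hq hmid hQ hsl hlow n hn
    simp only [Set.mem_iUnion, not_exists, Set.mem_ofPred_eq, not_le] at hq
    set Q := ∑ i, q i with hQdef
    have hQ' : (1 : ℝ) ≤ Q := by exact_mod_cast hQ
    set m := ∫ ω', g Q (X 1 ω') ∂μ with hm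
    obtain ⟨a, ha, a', ha', h1, h2, h3⟩ := exists_grid (L Q) hn
    have hsign : (0 ≤ m ∧ ∀ k, 0 ≤ g Q (X k ω)) ∨ (m ≤ 0 ∧ ∀ k, g Q (X k ω) ≤ 0) := by
      rcases hs with hs | hs
      · exact Or.inl ⟨integral_nonneg fun _ => hs Q hQ _, fun k => hs Q hQ _⟩
      · exact Or.inr ⟨integral_nonpos fun _ => hs Q hQ _, fun k => hs Q hQ _⟩
    refine (abs_sum_sandwich (Finset.Icc_subset_Icc_right h1) (Finset.Icc_subset_Icc_right h2)
      hsign (hq a ha).le (hq a' ha').le).trans ?_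
    have hmle : |m| ≤ 4 * W / (lowT d Q * √Q) := tail_abs hW hQ hlow (hz Q hQ) (hx Q hQ)
    have hB := lowT_pos (d := d) hQ
    have hprod : ∏ i, (n i : ℝ) ≤ 2 ^ (Q + d) := by
      have e : Q + d = ∑ i : Fin d, (q i + 1) := by rw [Finset.sum_add_distrib]; simp [hQdef]
      rw [e, ← Finset.prod_pow_eq_pow_sum]
      refine Finset.prod_le_prod (fun i _ => Nat.cast_nonneg _) fun i _ => ?_
      exact_mod_cast (hn i).2.le
    have hinvL : ((2 : ℝ) ^ L Q)⁻¹ ≤ ((Q : ℝ) ^ (d + 3))⁻¹ :=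
      inv_anti₀ (by positivity) (by exact_mod_cast hL1 Q)
    have hsqQ : 1 ≤ √(Q : ℝ) := Real.one_le_sqrt.2 hQ'
    have hfin : |m| * (((Icc 1 (gridPt q (L Q) a')).card : ℝ) - (Icc 1 (gridPt q (L Q) a)).card) ≤
        ε / 2 * √(2 ^ Q) := by
      have s2 : √((2 : ℝ) ^ Q) * √(2 ^ Q) = 2 ^ Q := Real.mul_self_sqrt (by positivity)
      have s0 : (0 : ℝ) < √(2 ^ Q) := by positivity
      calc |m| * (((Icc 1 (gridPt q (L Q) a')).card : ℝ) - (Icc 1 (gridPt q (L Q) a)).card)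
          ≤ |m| * (2 ^ (d + 1) * (2 ^ L Q)⁻¹ * ∏ i, (n i : ℝ)) := by gcongr
        _ ≤ (4 * W / (lowT d Q * 1)) * (2 ^ (d + 1) * ((Q : ℝ) ^ (d + 3))⁻¹ * 2 ^ (Q + d)) := by
          have hP : (0 : ℝ) ≤ ∏ i, (n i : ℝ) := Finset.prod_nonneg fun i _ => Nat.cast_nonneg _
          have hm2 : |m| ≤ 4 * W / (lowT d Q * 1) := hmle.trans (by gcongr)
          gcongr
        _ = (4 * W * 2 ^ (2 * d + 1) / (Q : ℝ)) * (2 ^ Q / √(2 ^ Q)) := by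
          unfold lowT
          rw [show d + 3 = (d + 2) + 1 by omega, pow_succ (Q : ℝ) (d + 2), pow_add (2 : ℝ) Q d,
            show 2 * d + 1 = d + (d + 1) by omega, pow_add (2 : ℝ) d (d + 1)]
          field_simp
        _ = (4 * W * 2 ^ (2 * d + 1) / (Q : ℝ)) * √(2 ^ Q) := by
          congr 1
          exact Real.div_sqrt
        _ ≤ _ := by gcongr
    linarith
  · filter_upwards [(tendsto_tot hd).eventually (eventually_ge_atTop 2),
      (tendsto_tot hd).eventually (exp_le_lowT d)] with q hQ2 hlow
    set Q := ∑ i, q i with hQdef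
    have hQ : 1 ≤ Q := by omega
    have hQ' : (1 : ℝ) < Q := by exact_mod_cast hQ2
    have hbp := highT_pos hQ
    have hlogQ : 0 < Real.log Q := Real.log_pos hQ'
    have hκ0 : 0 < κ := by positivity
    have hmeasg := (hg Q).measurable
    have hone : ∀ a ∈ Fintype.piFinset (fun _ : Fin d => range (2 ^ (L Q + 1) + 1)),
        μ {ω | midLevel κ W d Q ≤ |∑ k ∈ Icc 1 (gridPt q (L Q) a),
            (g Q (X k ω) - ∫ ω', g Q (X 1 ω') ∂μ)|} ≤
        ENNReal.ofReal (2 * Real.exp (-(κ * Real.log Q))) := by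
      intro a _
      refine H.bernstein_inv (hg Q) rfl (M := highT Q) (v := 4 * W / √Q) (fun x => ?_) ?_ hbp
        (by positivity) (by positivity) (fun k hk => (Finset.mem_Icc.1 hk).1) ?_
      · rcases hs with hs | hs
        · refine (abs_sub_mean_le H hmeasg (hs Q hQ) (fun x => (le_abs_self _).trans (hb Q hQ x))
            x).trans (by linarith)
        · refine (abs_sub_mean_le H hmeasg (a := -highT Q) (fun x => ?_) (hs Q hQ) x).trans
            (by linarith)
          exact (abs_le.1 (hb Q hQ x)).1
      · have hi2 : Integrable (fun ω => (g Q (X 1 ω)) ^ 2) μ :=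
          H.integrable_comp (h := fun x => g Q x ^ 2) le_rfl (hmeasg.pow_const 2)
            (C := highT Q ^ 2) fun x => by
              rw [abs_pow]; exact pow_le_pow_left₀ (abs_nonneg _) (hb Q hQ x) 2
        exact (integral_centered_sq_le (H.integrable_comp le_rfl hmeasg (hb Q hQ)) hi2).trans
          (tail_sq hW hQ hlow (hz Q hQ) (hx Q hQ))
      · rw [card_Icc_one]
        have e : Q + d = ∑ i : Fin d, (q i + 1) := by rw [Finset.sum_add_distrib]; simp [hQdef]
        rw [e, ← Finset.prod_pow_eq_pow_sum]
        refine Finset.prod_le_prod (fun i _ => Nat.cast_nonneg _) fun i _ => ?_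
        have : gridPt q (L Q) a i ≤ 2 ^ (q i + 1) := min_le_right _ _
        exact_mod_cast this
    refine (measure_biUnion_finset_le _ _).trans ((Finset.sum_le_card_nsmul _ _ _ hone).trans ?_)
    rw [nsmul_eq_mul, ← ENNReal.ofReal_natCast, ← ENNReal.ofReal_mul (Nat.cast_nonneg _)]
    refine ENNReal.ofReal_le_ofReal ?_
    rw [Fintype.card_piFinset]
    simp only [Finset.card_range, Finset.prod_const, Finset.card_univ, Fintype.card_fin]
    have c1 : ((2 ^ (L Q + 1) + 1 : ℕ) : ℝ) ≤ 5 * (Q : ℝ) ^ (d + 3) := by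
      have c2 := hL2 Q hQ2
      have c3 : 1 ≤ Q ^ (d + 3) := Nat.one_le_pow _ _ (by omega)
      have c4 : 2 ^ (L Q + 1) + 1 ≤ 5 * Q ^ (d + 3) := by rw [pow_succ]; omega
      exact_mod_cast c4
    have c5 : Real.exp (-(κ * Real.log Q)) = (Q : ℝ) ^ (-κ) := by
      rw [Real.rpow_def_of_pos (by linarith)]; congr 1; ring
    rw [c5, Nat.cast_pow]
    calc ((2 ^ (L Q + 1) + 1 : ℕ) : ℝ) ^ d * (2 * (Q : ℝ) ^ (-κ))
        ≤ (5 * (Q : ℝ) ^ (d + 3)) ^ d * (2 * (Q : ℝ) ^ (-κ)) := by gcongr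
      _ = 5 ^ d * 2 * ((Q : ℝ) ^ ((d + 3) * d) * (Q : ℝ) ^ (-κ)) := by
        rw [mul_pow, ← pow_mul]; ring
      _ = _ := by
        rw [← Real.rpow_natCast (Q : ℝ) ((d + 3) * d), ← Real.rpow_add (by linarith)]
        congr 2
        rw [hκ]; push_cast; ring

end

/-! ### Large values -/

section

variable {Ω : Type} [MeasurableSpace Ω] {μ : Measure Ω} [IsProbabilityMeasure μ] {d : ℕ}
  {X : (Fin d → ℕ) → Ω → ℝ}

/-- The upper corner of the block with exponents `q`. -/
def blockTop (q : Fin d → ℕ) : Fin d → ℕ := fun i => 2 ^ (q i + 1)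

lemma card_blockTop (q : Fin d → ℕ) :
    ((Icc 1 (blockTop q)).card : ℝ) = 2 ^ d * 2 ^ (∑ i, q i) := by
  rw [card_Icc_one]
  simp only [blockTop]
  push_cast
  rw [Finset.prod_pow_eq_pow_sum, Finset.sum_add_distrib, pow_add]
  simp [mul_comm]

lemma InBlock.le_blockTop {q n : Fin d → ℕ} (hn : InBlock q n) : n ≤ blockTop q :=
  fun i => (hn i).2.le

/-- Negative association bounds the probability that a one-sided exceedance happens at all points
of a finite set. -/
lemma NAField.measure_forall_le (H : NAField μ X) {s : Set ℝ}
    (hs : Monotone (s.indicator (1 : ℝ → ℝ)) ∨ Antitone (s.indicator (1 : ℝ → ℝ)))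
    (hms : MeasurableSet s) {A : Finset (Fin d → ℕ)} (hA : ∀ k ∈ A, 1 ≤ k) {π : ℝ}
    (hπ : μ.real {ω | X 1 ω ∈ s} ≤ π) :
    μ {ω | ∀ k ∈ A, X k ω ∈ s} ≤ ENNReal.ofReal (π ^ A.card) := by
  classical
  have h01 : ∀ x, 0 ≤ s.indicator (1 : ℝ → ℝ) x := fun x =>
    Set.indicator_nonneg (fun _ _ => zero_le_one) x
  have h1 : ∫ ω, s.indicator (1 : ℝ → ℝ) (X 1 ω) ∂μ = μ.real {ω | X 1 ω ∈ s} := by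
    have hm : MeasurableSet {ω | X 1 ω ∈ s} := H.meas 1 le_rfl hms
    rw [← integral_indicator_one hm]
    rfl
  have hm : MeasurableSet {ω | ∀ k ∈ A, X k ω ∈ s} := by
    have : {ω | ∀ k ∈ A, X k ω ∈ s} = ⋂ k ∈ A, {ω | X k ω ∈ s} := by ext; simp
    rw [this]
    exact Finset.measurableSet_biInter _ fun k hk => H.meas k (hA k hk) hms
  have h2 : μ.real {ω | ∀ k ∈ A, X k ω ∈ s} =
      ∫ ω, ∏ k ∈ A, s.indicator (1 : ℝ → ℝ) (X k ω) ∂μ := by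
    rw [← integral_indicator_one hm]
    congr 1
    ext ω
    by_cases hω : ∀ k ∈ A, X k ω ∈ s
    · rw [Set.indicator_of_mem (by exact hω), Finset.prod_eq_one]
      · rfl
      · intro k hk
        rw [Set.indicator_of_mem (hω k hk)]; rfl
    · rw [Set.indicator_of_notMem (by exact hω)]
      push Not at hω
      obtain ⟨k, hk, hks⟩ := hω
      rw [Finset.prod_eq_zero hk (Set.indicator_of_notMem hks _)]
  have h3 := H.prod_le hs h01 (C := 1)
    (fun x => Set.indicator_le_self' (fun _ _ => zero_le_one) x) A hA
  rw [← ofReal_measureReal]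
  refine ENNReal.ofReal_le_ofReal ?_
  rw [h2]
  refine h3.trans ?_
  rw [h1]
  exact pow_le_pow_left₀ measureReal_nonneg hπ _

/-- Almost surely a block eventually contains fewer than `4 (d + 1)` values in a half-line `s Q`
beyond the upper truncation level. A fixed set of `p` points lies in it with probability at most
the `p`-th power of `O(2^(-Q) Q^(-1/4))`, and there are at most `(2^d 2^Q)^p` such sets. -/
lemma few_jumps (hd : d ≠ 0) (H : NAField μ X)
    (hW : Integrable (fun ω => (X 1 ω) ^ 2 * √(plog |X 1 ω|)) μ) {s : ℕ → Set ℝ}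
    (hs : ∀ Q, Monotone ((s Q).indicator (1 : ℝ → ℝ)) ∨ Antitone ((s Q).indicator (1 : ℝ → ℝ)))
    (hms : ∀ Q, MeasurableSet (s Q)) (hsb : ∀ Q, ∀ x ∈ s Q, highT Q < |x|) :
    ∀ᵐ ω ∂μ, ∀ᶠ q : Fin d → ℕ in atTop, ∀ A ⊆ Icc 1 (blockTop q),
      (∀ k ∈ A, X k ω ∈ s (∑ i, q i)) → A.card < 4 * (d + 1) := by
  set W := wMom μ X with hWdef
  have hW0 : 0 ≤ W := wMom_nonneg
  set p := 4 * (d + 1) with hp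
  have hBC := borel_cantelli_rpow (μ := μ) hd (r := d + 1) (C := (2 ^ d * (4 * W)) ^ p)
    (E := fun q : Fin d → ℕ => ⋃ A ∈ powersetCard p (Icc 1 (blockTop q)),
        {ω | ∀ k ∈ A, X k ω ∈ s (∑ i, q i)}) (by linarith) ?_
  · filter_upwards [hBC] with ω hω
    filter_upwards [hω] with q hq A hA hAs
    simp only [Set.mem_iUnion, not_exists, Set.mem_ofPred_eq] at hq
    by_contra hcard
    obtain ⟨A', hA', hc⟩ := Finset.exists_subset_card_eq (not_lt.1 hcard)
    exact hq A' (Finset.mem_powersetCard.2 ⟨hA'.trans hA, hc⟩) fun k hk => hAs k (hA' hk)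
  · filter_upwards [(tendsto_tot hd).eventually (eventually_ge_atTop 1),
      (tendsto_tot hd).eventually (exp_le_lowT d)] with q hQ hlow
    set Q := ∑ i, q i with hQdef
    have hQ' : (0 : ℝ) < Q := by exact_mod_cast hQ
    have hbp := highT_pos hQ
    set π := 4 * W / (highT Q ^ 2 * √Q) with hπ
    have hπ1 : μ.real {ω | X 1 ω ∈ s Q} ≤ π :=
      (measureReal_mono (fun ω hω => hsb Q _ hω : {ω | X 1 ω ∈ s Q} ⊆ {ω | highT Q < |X 1 ω|})
        (measure_ne_top _ _)).trans (tail_prob (H.meas 1 le_rfl) hW hQ (hlow.trans (lowT_le_highT hQ)))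
    have hone : ∀ A ∈ powersetCard p (Icc 1 (blockTop q)),
        μ {ω | ∀ k ∈ A, X k ω ∈ s Q} ≤ ENNReal.ofReal (π ^ p) := by
      intro A hA
      obtain ⟨hA1, hA2⟩ := Finset.mem_powersetCard.1 hA
      rw [← hA2]
      exact H.measure_forall_le (hs Q) (hms Q) (fun k hk => (Finset.mem_Icc.1 (hA1 hk)).1) hπ1
    refine (measure_biUnion_finset_le _ _).trans ((Finset.sum_le_card_nsmul _ _ _ hone).trans ?_)
    rw [nsmul_eq_mul, ← ENNReal.ofReal_natCast, ← ENNReal.ofReal_mul (Nat.cast_nonneg _)]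
    refine ENNReal.ofReal_le_ofReal ?_
    have hc : ((powersetCard p (Icc 1 (blockTop q))).card : ℝ) ≤ (2 ^ d * 2 ^ Q) ^ p := by
      rw [Finset.card_powersetCard, ← card_blockTop]
      exact_mod_cast Nat.choose_le_pow _ _
    have hπ0 : 0 ≤ π := by positivity
    have e1 : 2 ^ d * 2 ^ Q * π = 2 ^ d * (4 * W) * (Q : ℝ) ^ (-(1 / 4) : ℝ) := by
      have e2 : highT Q ^ 2 = 2 ^ Q / (Q : ℝ) ^ (1 / 4 : ℝ) := by
        unfold highT
        rw [div_pow, Real.sq_sqrt (by positivity),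
          ← Real.rpow_natCast ((Q : ℝ) ^ (1 / 8 : ℝ)) 2, ← Real.rpow_mul hQ'.le]
        norm_num
      have e3 : √(Q : ℝ) = (Q : ℝ) ^ (1 / 4 : ℝ) * (Q : ℝ) ^ (1 / 4 : ℝ) := by
        rw [Real.sqrt_eq_rpow, ← Real.rpow_add hQ']; norm_num
      rw [hπ, e2, e3, Real.rpow_neg hQ'.le]
      field_simp
    calc _ ≤ (2 ^ d * 2 ^ Q) ^ p * π ^ p := by gcongr
      _ = (2 ^ d * (4 * W)) ^ p * ((Q : ℝ) ^ (-(1 / 4) : ℝ)) ^ p := by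
        rw [← mul_pow, e1, mul_pow]
      _ = _ := by
        rw [← Real.rpow_natCast ((Q : ℝ) ^ (-(1 / 4) : ℝ)), ← Real.rpow_mul hQ'.le]
        congr 2
        rw [hp]; push_cast; ring

/-- The moment function of the theorem. -/
def momF (d : ℕ) (x : ℝ) : ℝ := x ^ 2 * (plog |x|) ^ (d - 1) / plog (plog |x|)

lemma momF_nonneg (d : ℕ) (x : ℝ) : 0 ≤ momF d x := by
  have h1 := one_le_plog |x|
  have h2 := one_le_plog (plog |x|)
  unfold momF
  positivity

/-- The single-term comparison behind `layer_cake`: if `|x|` exceeds the level of `Q`, then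
`Q = O(log|x|)` and `2^Q = O(x² / log log|x|)`. -/
lemma layer_term (d : ℕ) {ε : ℝ} (hε : 0 < ε) : ∃ C : ℝ, 0 ≤ C ∧ ∀ (Q : ℕ) (x : ℝ),
    ε * (√(2 ^ Q) * √(lam Q)) < |x| → ((Q : ℝ) + 1) ^ (d - 1) * 2 ^ Q ≤ C * momF d x := by
  set C1 : ℝ := 4 + 3 * |Real.log ε| with hC1
  set C2 : ℝ := max 1 (ε ^ 2)⁻¹ with hC2
  have hC2' : 1 ≤ C2 := le_max_left _ _
  refine ⟨C1 ^ (d - 1) * C2, by positivity, fun Q x hx => ?_⟩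
  have hl := one_le_lam Q
  have hp := one_le_plog |x|
  have hpp := one_le_plog (plog |x|)
  have hlog2 : 2 / 3 < Real.log 2 := lt_trans (by norm_num) Real.log_two_gt_d9
  have hsl : 1 ≤ √(lam Q) := Real.one_le_sqrt.2 hl
  have hs0 : (0 : ℝ) < √(2 ^ Q) := by positivity
  have hx0 : 0 < |x| := lt_trans (by positivity) hx
  have a1 : (Q : ℝ) + 1 ≤ C1 * plog |x| := by
    have b1 : ε * √(2 ^ Q) ≤ |x| := by
      refine le_trans ?_ hx.le
      exact mul_le_mul_of_nonneg_left (le_mul_of_one_le_right hs0.le hsl) hε.le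
    have b2 := Real.log_le_log (by positivity) b1
    rw [Real.log_mul hε.ne' hs0.ne', Real.log_sqrt (by positivity), Real.log_pow] at b2
    have b3 := log_le_plog hx0
    have b4 := neg_abs_le (Real.log ε)
    have b5 := abs_nonneg (Real.log ε)
    have b6 : (Q : ℝ) * (2 / 3) ≤ Q * Real.log 2 :=
      mul_le_mul_of_nonneg_left hlog2.le (Nat.cast_nonneg _)
    rw [hC1]
    nlinarith
  have a2 : (2 : ℝ) ^ Q * plog (plog |x|) ≤ C2 * x ^ 2 := by
    rcases le_total |x| (2 ^ Q) with h | h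
    · have b1 : plog (plog |x|) ≤ lam Q := plog_mono (plog_mono h)
      have b2 : ε ^ 2 * (2 ^ Q * lam Q) ≤ x ^ 2 := by
        have := pow_le_pow_left₀ (by positivity) hx.le 2
        rwa [mul_pow, mul_pow, Real.sq_sqrt (by positivity), Real.sq_sqrt (by positivity),
          sq_abs] at this
      calc (2 : ℝ) ^ Q * plog (plog |x|) ≤ 2 ^ Q * lam Q := by gcongr
        _ = (ε ^ 2)⁻¹ * (ε ^ 2 * (2 ^ Q * lam Q)) := by field_simp
        _ ≤ C2 * x ^ 2 := mul_le_mul (le_max_right _ _) b2 (by positivity) (by positivity)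
    · have b1 : 1 ≤ |x| := (one_le_pow₀ (by norm_num)).trans h
      have b2 : plog (plog |x|) ≤ |x| := (plog_le_self hp).trans (plog_le_self b1)
      calc (2 : ℝ) ^ Q * plog (plog |x|) ≤ |x| * |x| :=
            mul_le_mul h b2 (by positivity) (by positivity)
        _ = 1 * x ^ 2 := by rw [one_mul, ← sq, sq_abs]
        _ ≤ _ := mul_le_mul_of_nonneg_right hC2' (sq_nonneg _)
  unfold momF
  rw [← mul_div_assoc, le_div_iff₀ (by linarith)]
  calc ((Q : ℝ) + 1) ^ (d - 1) * 2 ^ Q * plog (plog |x|)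
      = ((Q : ℝ) + 1) ^ (d - 1) * (2 ^ Q * plog (plog |x|)) := by ring
    _ ≤ (C1 * plog |x|) ^ (d - 1) * (C2 * x ^ 2) := by gcongr
    _ = _ := by rw [mul_pow]; ring

/-- The weights of the levels exceeded by `|x|` sum to at most a multiple of the moment function:
the largest exceeded level dominates. -/
lemma layer_cake (d : ℕ) {ε : ℝ} (hε : 0 < ε) : ∃ C : ℝ, 0 ≤ C ∧ ∀ (n : ℕ) (x : ℝ),
    ∑ Q ∈ range n, (((Q : ℝ) + 1) ^ (d - 1) * 2 ^ Q) *
      {y : ℝ | ε * (√(2 ^ Q) * √(lam Q)) < |y|}.indicator 1 x ≤ C * momF d x := by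
  obtain ⟨C, hC, h⟩ := layer_term d hε
  refine ⟨2 * C, by positivity, fun n x => ?_⟩
  have hm := momF_nonneg d x
  induction n with
  | zero => simpa using by positivity
  | succ n ih =>
    by_cases hn : ε * (√(2 ^ n) * √(lam n)) < |x|
    · have h2 := h n x hn
      have h3 : ∑ Q ∈ range (n + 1), (((Q : ℝ) + 1) ^ (d - 1) * 2 ^ Q) *
          {y : ℝ | ε * (√(2 ^ Q) * √(lam Q)) < |y|}.indicator 1 x ≤
          ∑ Q ∈ range (n + 1), ((n : ℝ) + 1) ^ (d - 1) * 2 ^ Q := by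
        refine Finset.sum_le_sum fun Q hQ => ?_
        have hQn : (Q : ℝ) ≤ n := by
          exact_mod_cast Nat.lt_succ_iff.1 (Finset.mem_range.1 hQ)
        have h4 : {y : ℝ | ε * (√(2 ^ Q) * √(lam Q)) < |y|}.indicator (1 : ℝ → ℝ) x ≤ 1 :=
          Set.indicator_le_self' (fun _ _ => zero_le_one) x
        calc _ ≤ (((Q : ℝ) + 1) ^ (d - 1) * 2 ^ Q) * 1 :=
              mul_le_mul_of_nonneg_left h4 (by positivity)
          _ ≤ _ := by rw [mul_one]; gcongr
      refine h3.trans ?_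
      rw [← Finset.mul_sum]
      have h5 : ∑ Q ∈ range (n + 1), (2 : ℝ) ^ Q ≤ 2 * 2 ^ n := by
        rw [geom_sum_eq (by norm_num), pow_succ]; norm_num
        linarith
      calc ((n : ℝ) + 1) ^ (d - 1) * ∑ Q ∈ range (n + 1), (2 : ℝ) ^ Q
          ≤ ((n : ℝ) + 1) ^ (d - 1) * (2 * 2 ^ n) := by gcongr
        _ = 2 * (((n : ℝ) + 1) ^ (d - 1) * 2 ^ n) := by ring
        _ ≤ 2 * (C * momF d x) := by gcongr
        _ = _ := by ring
    · rw [Finset.sum_range_succ, Set.indicator_of_notMem (by exact hn), mul_zero, add_zero]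
      exact ih

/-- Almost surely, for all but finitely many blocks, no value in the block exceeds
`ε √(2^Q log log 2^Q)`. This is where the moment condition is needed in full. -/
lemma large_as (hd : d ≠ 0) (H : NAField μ X)
    (hmom : Integrable (fun ω => momF d (X 1 ω)) μ) {ε : ℝ} (hε : 0 < ε) :
    ∀ᵐ ω ∂μ, ∀ᶠ q : Fin d → ℕ in atTop, ∀ k ∈ Icc 1 (blockTop q),
      |X k ω| ≤ ε * (√(2 ^ (∑ i, q i)) * √(lam (∑ i, q i))) := by
  obtain ⟨C, hC, hcake⟩ := layer_cake d hε
  set s : ℕ → Set ℝ := fun Q => {y : ℝ | ε * (√(2 ^ Q) * √(lam Q)) < |y|} with hs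
  have hms : ∀ Q, MeasurableSet (s Q) := fun Q =>
    measurableSet_lt measurable_const measurable_norm
  have hind : ∀ Q, ∫ ω, (s Q).indicator (1 : ℝ → ℝ) (X 1 ω) ∂μ = μ.real {ω | X 1 ω ∈ s Q} := by
    intro Q
    have hm : MeasurableSet {ω | X 1 ω ∈ s Q} := H.meas 1 le_rfl (hms Q)
    rw [← integral_indicator_one hm]
    rfl
  have hii : ∀ Q, Integrable (fun ω => (s Q).indicator (1 : ℝ → ℝ) (X 1 ω)) μ := fun Q =>
    H.integrable_comp le_rfl (measurable_one.indicator (hms Q)) (C := 1) fun x => by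
      rw [Set.indicator_apply]
      split_ifs <;> simp
  have hsum : Summable fun Q : ℕ => ((Q : ℝ) + 1) ^ (d - 1) * (2 ^ d * 2 ^ Q *
      μ.real {ω | X 1 ω ∈ s Q}) := by
    have h1 : Summable fun Q : ℕ => (((Q : ℝ) + 1) ^ (d - 1) * 2 ^ Q) *
        μ.real {ω | X 1 ω ∈ s Q} := by
      refine summable_of_sum_range_le (c := ∫ ω, C * momF d (X 1 ω) ∂μ)
        (fun Q => by positivity) fun n => ?_
      have h2 : ∑ Q ∈ range n, (((Q : ℝ) + 1) ^ (d - 1) * 2 ^ Q) * μ.real {ω | X 1 ω ∈ s Q} =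
          ∫ ω, ∑ Q ∈ range n, (((Q : ℝ) + 1) ^ (d - 1) * 2 ^ Q) *
            (s Q).indicator (1 : ℝ → ℝ) (X 1 ω) ∂μ := by
        rw [integral_finsetSum _ fun Q _ => (hii Q).const_mul _]
        refine Finset.sum_congr rfl fun Q _ => ?_
        rw [integral_const_mul, hind]
      rw [h2]
      refine integral_mono (integrable_finsetSum _ fun Q _ => (hii Q).const_mul _)
        (hmom.const_mul C) fun ω => hcake n (X 1 ω)
    refine (h1.mul_left (2 ^ d)).congr fun Q => by ring
  have hBC := borel_cantelli (μ := μ) hd hsum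
    (E := fun q : Fin d → ℕ => ⋃ k ∈ Icc 1 (blockTop q), {ω | X k ω ∈ s (∑ i, q i)}) ?_
  · filter_upwards [hBC] with ω hω
    filter_upwards [hω] with q hq k hk
    simp only [Set.mem_iUnion, not_exists] at hq
    exact not_lt.1 (hq k hk)
  · refine Eventually.of_forall fun q => ?_
    refine (measure_biUnion_finset_le _ _).trans ?_
    rw [Finset.sum_congr rfl fun k hk =>
      H.measure_comp (Finset.mem_Icc.1 hk).1 (hms (∑ i, q i)), Finset.sum_const, nsmul_eq_mul,
      ← card_blockTop, ENNReal.ofReal_mul (Nat.cast_nonneg _), ENNReal.ofReal_natCast,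
      ofReal_measureReal]

/-- The highest layer is negligible: it has boundedly many nonzero terms, all of them small, and a
small mean. -/
lemma high_as (hd : d ≠ 0) (H : NAField μ X)
    (hW : Integrable (fun ω => (X 1 ω) ^ 2 * √(plog |X 1 ω|)) μ)
    (hmom : Integrable (fun ω => momF d (X 1 ω)) μ) {ε : ℝ} (hε : 0 < ε) :
    ∀ᵐ ω ∂μ, ∀ᶠ q : Fin d → ℕ in atTop, ∀ n, InBlock q n →
      |∑ k ∈ Icc 1 n, ((X k ω - clamp (-highT (∑ i, q i)) (highT (∑ i, q i)) (X k ω)) -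
        ∫ ω', (X 1 ω' - clamp (-highT (∑ i, q i)) (highT (∑ i, q i)) (X 1 ω')) ∂μ)| ≤
      ε * (√(2 ^ (∑ i, q i)) * √(lam (∑ i, q i))) := by
  set p : ℝ := 4 * (d + 1) with hp
  have hp0 : 0 < p := by positivity
  set W := wMom μ X with hWdef
  have hW0 : 0 ≤ W := wMom_nonneg
  have hmean : ∀ᶠ Q : ℕ in atTop, 2 ^ d * 4 * W / (Q : ℝ) ^ (3 / 8 : ℝ) ≤ ε / 2 :=
    (tendsto_const_nhds.div_atTop ((tendsto_rpow_atTop (by norm_num)).comp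
      tendsto_natCast_atTop_atTop)).eventually (eventually_le_nhds (by positivity))
  have j1 := few_jumps hd H hW (s := fun Q => Set.Ioi (max 0 (highT Q))) (fun Q => Or.inl ?_)
    (fun Q => measurableSet_Ioi) (fun Q x hx => ?_)
  · have j2 := few_jumps hd H hW (s := fun Q => Set.Iio (-max 0 (highT Q))) (fun Q => Or.inr ?_)
      (fun Q => measurableSet_Iio) (fun Q x hx => ?_)
    · filter_upwards [j1, j2, large_as hd H hmom (ε := ε / (4 * p)) (by positivity)]
        with ω h1 h2 h3
      filter_upwards [h1, h2, h3, (tendsto_tot hd).eventually hmean,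
        (tendsto_tot hd).eventually (eventually_ge_atTop 1),
        (tendsto_tot hd).eventually (exp_le_lowT d)] with q k1 k2 k3 k4 hQ hlow n hn
      set Q := ∑ i, q i with hQdef
      have hQ' : (0 : ℝ) < Q := by exact_mod_cast hQ
      set b := highT Q with hb
      have hb0 : 0 < b := highT_pos hQ
      rw [max_eq_right hb0.le] at k1 k2
      set T := √((2 : ℝ) ^ Q) * √(lam Q) with hT
      have hT0 : 0 ≤ T := by positivity
      have hsub : Icc 1 n ⊆ Icc 1 (blockTop q) := Finset.Icc_subset_Icc_right hn.le_blockTop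
      have hm : |∫ ω', (X 1 ω' - clamp (-b) b (X 1 ω')) ∂μ| ≤ 4 * W / (b * √Q) :=
        tail_abs (h := fun x => x - clamp (-b) b x) hW hQ (hlow.trans (lowT_le_highT hQ))
          (fun x hx => highLayer_zero hx) (abs_highLayer_le hb0.le)
      rw [Finset.sum_sub_distrib, Finset.sum_const, nsmul_eq_mul]
      have s1 : |∑ k ∈ Icc 1 n, (X k ω - clamp (-b) b (X k ω))| ≤ ε / 2 * T := by
        set A1 := (Icc 1 n).filter fun k => b < X k ω with hA1
        set A2 := (Icc 1 n).filter fun k => X k ω < -b with hA2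
        have c1 : (A1.card : ℝ) ≤ p := by
          have := k1 A1 ((Finset.filter_subset _ _).trans hsub) fun k hk =>
            (Finset.mem_filter.1 hk).2
          rw [hp]; exact_mod_cast this.le
        have c2 : (A2.card : ℝ) ≤ p := by
          have := k2 A2 ((Finset.filter_subset _ _).trans hsub) fun k hk =>
            (Finset.mem_filter.1 hk).2
          rw [hp]; exact_mod_cast this.le
        have c3 : ∀ k ∈ Icc 1 n, |X k ω - clamp (-b) b (X k ω)| ≤
            (if b < X k ω then ε / (4 * p) * T else 0) +
            (if X k ω < -b then ε / (4 * p) * T else 0) := by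
          intro k hk
          have e0 : 0 ≤ ε / (4 * p) * T := by positivity
          have e1 := (abs_highLayer_le hb0.le (X k ω)).trans (k3 k (hsub hk))
          by_cases hc : |X k ω| ≤ b
          · rw [highLayer_zero hc, abs_zero]
            split_ifs <;> linarith
          · rcases lt_abs.1 (not_le.1 hc) with h | h
            · rw [if_pos h]
              split_ifs <;> linarith
            · rw [if_pos (by linarith : X k ω < -b)]
              split_ifs <;> linarith
        refine (Finset.abs_sum_le_sum_abs _ _).trans ((Finset.sum_le_sum c3).trans ?_)
        rw [Finset.sum_add_distrib, ← Finset.sum_filter, ← Finset.sum_filter, Finset.sum_const,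
          Finset.sum_const, nsmul_eq_mul, nsmul_eq_mul]
        calc _ ≤ p * (ε / (4 * p) * T) + p * (ε / (4 * p) * T) := by gcongr
          _ = _ := by field_simp; ring
      have s2 : |((Icc 1 n).card : ℝ) * ∫ ω', (X 1 ω' - clamp (-b) b (X 1 ω')) ∂μ| ≤
          ε / 2 * T := by
        rw [abs_mul, abs_of_nonneg (Nat.cast_nonneg _)]
        have e1 : ((Icc 1 n).card : ℝ) ≤ 2 ^ d * 2 ^ Q := by
          rw [← card_blockTop]; exact_mod_cast Finset.card_le_card hsub
        have e2 : √(Q : ℝ) = (Q : ℝ) ^ (1 / 8 : ℝ) * (Q : ℝ) ^ (3 / 8 : ℝ) := by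
          rw [Real.sqrt_eq_rpow, ← Real.rpow_add hQ']; norm_num
        calc _ ≤ (2 ^ d * 2 ^ Q) * (4 * W / (b * √Q)) := by gcongr
          _ = (2 ^ d * 4 * W / (Q : ℝ) ^ (3 / 8 : ℝ)) * (2 ^ Q / √(2 ^ Q)) := by
            rw [hb, highT, e2]; field_simp
          _ = (2 ^ d * 4 * W / (Q : ℝ) ^ (3 / 8 : ℝ)) * √(2 ^ Q) := by rw [Real.div_sqrt]
          _ ≤ ε / 2 * T := by
            refine mul_le_mul k4 ?_ (by positivity) (by positivity)
            exact le_mul_of_one_le_right (by positivity) (Real.one_le_sqrt.2 (one_le_lam Q))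
      refine (abs_sub _ _).trans ?_
      linarith
    · intro x y hxy
      simp only [Set.indicator_apply, Set.mem_Iio, Pi.one_apply]
      split_ifs with h1 h2 <;> linarith
    · have h1 : x < -max 0 (highT Q) := hx
      have h2 := le_max_left 0 (highT Q)
      have h3 := le_max_right 0 (highT Q)
      rw [abs_of_neg (by linarith)]; linarith
  · intro x y hxy
    simp only [Set.indicator_apply, Set.mem_Ioi, Pi.one_apply]
    split_ifs with h1 h2 <;> linarith
  · have h1 : max 0 (highT Q) < x := hx
    have h2 := le_max_left 0 (highT Q)
    have h3 := le_max_right 0 (highT Q)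
    rw [abs_of_pos (by linarith)]; linarith

end

/-! ### Assembling the layers -/

section

variable {Ω : Type} [MeasurableSpace Ω] {μ : Measure Ω} [IsProbabilityMeasure μ] {d : ℕ}
  {X : (Fin d → ℕ) → Ω → ℝ}

lemma plog_le_two_sqrt {y : ℝ} (hy : 1 ≤ y) : plog y ≤ 2 * √y := by
  have hy0 : 0 < y := by linarith
  have hs : 1 ≤ √y := Real.one_le_sqrt.2 hy
  have h1 : Real.log y ≤ 2 * √y := by
    have h2 := Real.log_le_sub_one_of_pos (Real.sqrt_pos.2 hy0)
    rw [Real.log_sqrt hy0.le] at h2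
    linarith
  unfold plog
  rcases le_total (Real.exp 1) y with h | h
  · rwa [max_eq_left h]
  · rw [max_eq_right h, Real.log_exp]; linarith

/-- For `d ≥ 2` the moment of the theorem dominates `E[X² (log|X|)^(1/2)]`. -/
lemma integrable_weak (hd : 2 ≤ d) (hX : Measurable (X 1))
    (hmom : Integrable (fun ω => momF d (X 1 ω)) μ) :
    Integrable (fun ω => (X 1 ω) ^ 2 * √(plog |X 1 ω|)) μ := by
  have hpm : Measurable plog := plog_mono.measurable
  refine (hmom.const_mul 2).mono'
    ((hX.pow_const 2).mul (hpm.comp hX.abs).sqrt).aestronglyMeasurable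
    (Eventually.of_forall fun ω => ?_)
  rw [Real.norm_eq_abs, abs_of_nonneg (by positivity)]
  simp only [momF]
  set p := plog |X 1 ω| with hp
  have hp1 : 1 ≤ p := one_le_plog _
  have hp0 : 0 < p := by linarith
  have hl : 0 < plog p := one_pos.trans_le (one_le_plog _)
  have h1 : p ≤ p ^ (d - 1) := le_self_pow₀ hp1 (by omega)
  have h2 : √p ≤ 2 * (p ^ (d - 1) / plog p) := by
    rw [← mul_div_assoc, le_div_iff₀ hl]
    calc √p * plog p ≤ √p * (2 * √p) :=
          mul_le_mul_of_nonneg_left (plog_le_two_sqrt hp1) (Real.sqrt_nonneg _)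
      _ = 2 * p := by nlinarith [Real.mul_self_sqrt hp0.le]
      _ ≤ _ := by linarith
  calc (X 1 ω) ^ 2 * √p ≤ (X 1 ω) ^ 2 * (2 * (p ^ (d - 1) / plog p)) :=
        mul_le_mul_of_nonneg_left h2 (sq_nonneg _)
    _ = _ := by ring

lemma pos_as (hd : d ≠ 0) (H : NAField μ X)
    (hW : Integrable (fun ω => (X 1 ω) ^ 2 * √(plog |X 1 ω|)) μ) {ε : ℝ} (hε : 0 < ε) :
    ∀ᵐ ω ∂μ, ∀ᶠ q : Fin d → ℕ in atTop, ∀ n, InBlock q n →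
      |∑ k ∈ Icc 1 n, ((clamp (lowT d (∑ i, q i)) (highT (∑ i, q i)) (X k ω) -
          lowT d (∑ i, q i)) -
        ∫ ω', (clamp (lowT d (∑ i, q i)) (highT (∑ i, q i)) (X 1 ω') - lowT d (∑ i, q i)) ∂μ)| ≤
      ε * √(2 ^ (∑ i, q i)) := by
  refine middle_as (g := fun Q x => clamp (lowT d Q) (highT Q) x - lowT d Q) hd H hW hε
    (fun Q x y h => sub_le_sub_right (clamp_mono _ _ h) _)
    (fun Q hQ x h => posLayer_zero (lowT_le_highT hQ) h)
    (fun Q hQ x => abs_posLayer_le (lowT_pos hQ).le (lowT_le_highT hQ) x)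
    (fun Q hQ x => ?_) (Or.inl fun Q hQ x => sub_nonneg.2 (le_clamp _ _ _))
  have h1 := le_clamp (lowT d Q) (highT Q) x
  have h2 := clamp_le (lowT_le_highT (d := d) hQ) x
  have h3 := lowT_pos (d := d) hQ
  rw [abs_of_nonneg (by linarith)]
  linarith

lemma neg_as (hd : d ≠ 0) (H : NAField μ X)
    (hW : Integrable (fun ω => (X 1 ω) ^ 2 * √(plog |X 1 ω|)) μ) {ε : ℝ} (hε : 0 < ε) :
    ∀ᵐ ω ∂μ, ∀ᶠ q : Fin d → ℕ in atTop, ∀ n, InBlock q n →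
      |∑ k ∈ Icc 1 n, ((clamp (-highT (∑ i, q i)) (-lowT d (∑ i, q i)) (X k ω) +
          lowT d (∑ i, q i)) -
        ∫ ω', (clamp (-highT (∑ i, q i)) (-lowT d (∑ i, q i)) (X 1 ω') +
          lowT d (∑ i, q i)) ∂μ)| ≤
      ε * √(2 ^ (∑ i, q i)) := by
  have hle : ∀ Q, 1 ≤ Q → ∀ x, clamp (-highT Q) (-lowT d Q) x ≤ -lowT d Q := fun Q hQ x =>
    clamp_le (neg_le_neg (lowT_le_highT (d := d) hQ)) x
  refine middle_as (g := fun Q x => clamp (-highT Q) (-lowT d Q) x + lowT d Q) hd H hW hε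
    (fun Q x y h => add_le_add_left (clamp_mono _ _ h) _)
    (fun Q hQ x h => negLayer_zero (lowT_le_highT hQ) h)
    (fun Q hQ x => abs_negLayer_le (lowT_pos hQ).le (lowT_le_highT hQ) x)
    (fun Q hQ x => ?_) (Or.inr fun Q hQ x => by linarith [hle Q hQ x])
  have h1 := le_clamp (-highT Q) (-lowT d Q) x
  have h2 := hle Q hQ x
  have h3 := lowT_pos (d := d) hQ
  rw [abs_of_nonpos (by linarith)]
  linarith

/-- Since `E X = 0`, the partial sum is the sum of the centred partial sums of the four layers. -/
lemma sum_split (H : NAField μ X) (hint : Integrable (X 1) μ) (hmean : ∫ ω, X 1 ω ∂μ = 0)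
    {Q : ℕ} (hQ : 1 ≤ Q) (A : Finset (Fin d → ℕ)) (ω : Ω) :
    ∑ k ∈ A, X k ω = ∑ k ∈ A, lowY μ X Q k ω +
      ∑ k ∈ A, ((clamp (lowT d Q) (highT Q) (X k ω) - lowT d Q) -
        ∫ ω', (clamp (lowT d Q) (highT Q) (X 1 ω') - lowT d Q) ∂μ) +
      ∑ k ∈ A, ((clamp (-highT Q) (-lowT d Q) (X k ω) + lowT d Q) -
        ∫ ω', (clamp (-highT Q) (-lowT d Q) (X 1 ω') + lowT d Q) ∂μ) +
      ∑ k ∈ A, ((X k ω - clamp (-highT Q) (highT Q) (X k ω)) -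
        ∫ ω', (X 1 ω' - clamp (-highT Q) (highT Q) (X 1 ω')) ∂μ) := by
  have hB : 0 < lowT d Q := lowT_pos hQ
  have hb : lowT d Q ≤ highT Q := lowT_le_highT hQ
  have hdom : ∀ h : ℝ → ℝ, Measurable h → (∀ x, |h x| ≤ |x|) →
      Integrable (fun ω => h (X 1 ω)) μ := fun h hm hle =>
    hint.mono (hm.comp (H.meas 1 le_rfl)).aestronglyMeasurable
      (Eventually.of_forall fun ω => hle _)
  have hc : ∀ a b : ℝ, Measurable (clamp a b) := fun a b => (clamp_mono a b).measurable
  have i1 := hdom (fun x => clamp (-lowT d Q) (lowT d Q) x) (hc _ _) (abs_clamp_le hB.le)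
  have i2 := hdom (fun x => clamp (lowT d Q) (highT Q) x - lowT d Q) ((hc _ _).sub_const _)
    (abs_posLayer_le hB.le hb)
  have i3 := hdom (fun x => clamp (-highT Q) (-lowT d Q) x + lowT d Q) ((hc _ _).add_const _)
    (abs_negLayer_le hB.le hb)
  have i4 := hdom (fun x => x - clamp (-highT Q) (highT Q) x) (measurable_id.sub (hc _ _))
    (abs_highLayer_le (hB.le.trans hb))
  have i12 : Integrable (fun ω => clamp (-lowT d Q) (lowT d Q) (X 1 ω) +
      (clamp (lowT d Q) (highT Q) (X 1 ω) - lowT d Q)) μ := i1.add i2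
  have i123 : Integrable (fun ω => clamp (-lowT d Q) (lowT d Q) (X 1 ω) +
      (clamp (lowT d Q) (highT Q) (X 1 ω) - lowT d Q) +
      (clamp (-highT Q) (-lowT d Q) (X 1 ω) + lowT d Q)) μ := i12.add i3
  have hm : (∫ ω, clamp (-lowT d Q) (lowT d Q) (X 1 ω) ∂μ) +
      (∫ ω, (clamp (lowT d Q) (highT Q) (X 1 ω) - lowT d Q) ∂μ) +
      (∫ ω, (clamp (-highT Q) (-lowT d Q) (X 1 ω) + lowT d Q) ∂μ) +
      (∫ ω, (X 1 ω - clamp (-highT Q) (highT Q) (X 1 ω)) ∂μ) = 0 := by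
    rw [← integral_add i1 i2, ← integral_add i12 i3, ← integral_add i123 i4, ← hmean]
    exact integral_congr_ae (Eventually.of_forall fun ω => (clamp_split hB hb _).symm)
  rw [← Finset.sum_add_distrib, ← Finset.sum_add_distrib, ← Finset.sum_add_distrib]
  refine Finset.sum_congr rfl fun k _ => ?_
  have hs := clamp_split hB hb (X k ω)
  unfold lowY
  linarith

lemma InBlock.two_pow_le_prod {q n : Fin d → ℕ} (hn : InBlock q n) :
    (2 : ℝ) ^ (∑ i, q i) ≤ ∏ i, (n i : ℝ) := by
  rw [← Finset.prod_pow_eq_pow_sum]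
  exact Finset.prod_le_prod (fun _ _ => by positivity) fun i _ => by exact_mod_cast (hn i).1

/-- The almost sure bound on the partial sums, block by block. -/
lemma block_bound (hd : 2 ≤ d) (H : NAField μ X) (hint : Integrable (X 1) μ)
    (hmean : ∫ ω, X 1 ω ∂μ = 0) (hmom : Integrable (fun ω => momF d (X 1 ω)) μ)
    {ε : ℝ} (hε : 0 < ε) :
    ∀ᵐ ω ∂μ, ∀ᶠ q : Fin d → ℕ in atTop, ∀ n, InBlock q n →
      |∑ k ∈ Icc 1 n, X k ω| ≤ (√(∫ ω, (X 1 ω) ^ 2 ∂μ) + 5 * ε) *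
        √(2 * d * (∏ i, (n i : ℝ)) * plog (plog (∏ i, (n i : ℝ)))) := by
  have hd0 : d ≠ 0 := by omega
  have hW := integrable_weak hd (H.meas 1 le_rfl) hmom
  obtain ⟨s, hs⟩ := chain_as hd0 H hW hε
  filter_upwards [hs, sharp_as hd0 H hW hε s, pos_as hd0 H hW hε, neg_as hd0 H hW hε,
    high_as hd0 H hW hmom hε] with ω h1 h2 h3 h4 h5
  filter_upwards [h1, h2, h3, h4, h5, (tendsto_tot hd0).eventually_ge_atTop 1]
    with q g1 g2 g3 g4 g5 hQ n hn
  rw [sum_split H hint hmean hQ]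
  have k1 := g1 n hn
  have k2 := g2 n hn
  have k3 := g3 n hn
  have k4 := g4 n hn
  have k5 := g5 n hn
  set Q := ∑ i, q i with hQdef
  set N := ∏ i, (n i : ℝ) with hN
  set σ := √(∫ ω, (X 1 ω) ^ 2 ∂μ) with hσ
  have hσ0 : 0 ≤ σ := Real.sqrt_nonneg _
  have hNQ : (2 : ℝ) ^ Q ≤ N := hn.two_pow_le_prod
  have hN0 : 0 < N := lt_of_lt_of_le (by positivity) hNQ
  have hlam : lam Q ≤ plog (plog N) := plog_mono (plog_mono hNQ)
  have hlam1 : 1 ≤ lam Q := one_le_lam Q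
  have hd2 : (2 : ℝ) ≤ d := by exact_mod_cast hd
  set T := √(2 * d * N * plog (plog N)) with hT
  have t1 : √(2 * d * lam Q) * √N ≤ T := by
    rw [← Real.sqrt_mul (by positivity), hT]
    refine Real.sqrt_le_sqrt ?_
    nlinarith [mul_le_mul_of_nonneg_left hlam (show 0 ≤ 2 * (d : ℝ) * N by positivity)]
  have t2 : √(2 ^ Q) * √(lam Q) ≤ T := by
    rw [← Real.sqrt_mul (by positivity), hT]
    refine Real.sqrt_le_sqrt ?_
    calc 2 ^ Q * lam Q ≤ N * plog (plog N) := by gcongr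
      _ ≤ (2 * d) * (N * plog (plog N)) :=
        le_mul_of_one_le_left (by have := hlam1.trans hlam; positivity) (by linarith)
      _ = _ := by ring
  have t3 : √(2 ^ Q) ≤ √(2 ^ Q) * √(lam Q) :=
    le_mul_of_one_le_right (Real.sqrt_nonneg _) (Real.one_le_sqrt.2 hlam1)
  have t4 : √(2 ^ Q) ≤ T := t3.trans t2
  have u1 := mul_le_mul_of_nonneg_left t2 hε.le
  have u2 := mul_le_mul_of_nonneg_left t4 hε.le
  have u3 := mul_le_mul_of_nonneg_left t1 (add_nonneg hσ0 hε.le)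
  rw [abs_le] at *
  constructor <;> linarith [k1.1, k1.2, k2.1, k2.2, k3.1, k3.2, k4.1, k4.2, k5.1, k5.2]

/-- The exponents of the dyadic block of `n` tend to infinity with `n`. -/
lemma tendsto_log_block : Tendsto (fun (n : Fin d → ℕ) i => Nat.log 2 (n i)) atTop atTop := by
  refine tendsto_atTop_atTop.2 fun b => ⟨fun i => 2 ^ b i, fun n hn i => ?_⟩
  exact Nat.le_log_of_pow_le (by norm_num) (hn i)

end

/-- **Upper bound in the LIL for negatively associated random fields** (Theorem 2).
If `d ≥ 2` and `{X_n : n ∈ ℕ^d}` is a negatively associated field of identically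
distributed random variables with `E X_1 = 0` and
`E[X_1² log^{d-1}|X_1| / log log |X_1|] < ∞`, then a.s.
`limsup_{n → ∞} |S_n| / √(2 d |n| log log |n|) ≤ (E X_1²)^{1/2}`. -/
theorem lil_upper_bound_na_field
    {Ω : Type} [MeasurableSpace Ω] (μ : Measure Ω) [IsProbabilityMeasure μ]
    (d : ℕ) (hd : 2 ≤ d)
    (X : (Fin d → ℕ) → Ω → ℝ)
    (hmeas : ∀ k : Fin d → ℕ, 1 ≤ k → Measurable (X k))
    (hNA : NegAssocOn μ X (Set.Ici 1))
    (hid : ∀ k : Fin d → ℕ, 1 ≤ k → μ.map (X k) = μ.map (X 1))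
    (hint : Integrable (X 1) μ)
    (hmean : ∫ ω, X 1 ω ∂μ = 0)
    (hmom : Integrable
      (fun ω => (X 1 ω) ^ 2 * (plog |X 1 ω|) ^ (d - 1) / plog (plog |X 1 ω|)) μ) :
    ∀ᵐ ω ∂μ,
      Filter.limsup (fun n : Fin d → ℕ =>
          ((|∑ k ∈ Finset.Icc 1 n, X k ω| /
            Real.sqrt (2 * d * (∏ i, (n i : ℝ)) *
              plog (plog (∏ i, (n i : ℝ))))) : EReal))
        Filter.atTop ≤ ((Real.sqrt (∫ ω, (X 1 ω) ^ 2 ∂μ)) : EReal) := by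
  have H : NAField μ X := ⟨hmeas, hNA, hid⟩
  have hall : ∀ᵐ ω ∂μ, ∀ j : ℕ, ∀ᶠ q : Fin d → ℕ in atTop, ∀ n, InBlock q n →
      |∑ k ∈ Icc 1 n, X k ω| ≤
        (√(∫ ω, (X 1 ω) ^ 2 ∂μ) + 5 * (1 / ((j : ℝ) + 1))) *
        √(2 * d * (∏ i, (n i : ℝ)) * plog (plog (∏ i, (n i : ℝ)))) :=
    ae_all_iff.2 fun j => block_bound hd H hint hmean hmom (by positivity)
  filter_upwards [hall] with ω hω
  set σ := √(∫ ω, (X 1 ω) ^ 2 ∂μ) with hσ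
  have hj : ∀ j : ℕ, limsup (fun n : Fin d → ℕ =>
      ((|∑ k ∈ Icc 1 n, X k ω| / √(2 * d * (∏ i, (n i : ℝ)) *
        plog (plog (∏ i, (n i : ℝ))))) : EReal)) atTop ≤
      ((σ + 5 * (1 / ((j : ℝ) + 1)) : ℝ) : EReal) := by
    intro j
    refine limsup_le_of_le ⟨⊥, fun a _ => bot_le⟩ ?_
    filter_upwards [tendsto_log_block.eventually (hω j), eventually_ge_atTop 1] with n hn hn1
    have hblock : InBlock (fun i => Nat.log 2 (n i)) n := fun i =>
      ⟨Nat.pow_log_le_self 2 (Nat.one_le_iff_ne_zero.1 (hn1 i)),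
        Nat.lt_pow_succ_log_self (by norm_num) _⟩
    rw [← EReal.coe_div, EReal.coe_le_coe_iff]
    exact div_le_of_le_mul₀ (Real.sqrt_nonneg _) (by positivity) (hn n hblock)
  have hlim : Tendsto (fun j : ℕ => ((σ + 5 * (1 / ((j : ℝ) + 1)) : ℝ) : EReal)) atTop
      (nhds (σ : EReal)) := by
    refine (continuous_coe_real_ereal.tendsto σ).comp ?_
    simpa using (tendsto_one_div_add_atTop_nhds_zero_nat (𝕜 := ℝ)).const_mul 5 |>.const_add σ
  exact ge_of_tendsto' hlim hj
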